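/- arXiv:1108.2219 — 3 statements merged into one kernel-verified Lean document; each statement's English description precedes it below -/
import Mathlib

section
/- The skew Schur function s_{(3,2,1)/(1)} (i.e., δ_3/δ_1) equals the Schur P-function P_{(3,2)}; equivalently, in any number of variables, ∑_T x^T over SSYT of shape (3,2,1)/(1) equals ∑_S x^S over shifted SSYT of shifted shape (3,2). -/
/-!
STATEMENT 10: s_{(3,2,1)/(1)} = P_{(3,2)} as formal power series.
-/

noncomputable section

/-- The cells of the skew Young diagram lam/mu (rows 0-indexed). -/
def skewCells (lam mu : List ℕ) : Finset (ℕ × ℕ) :=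
  (Finset.range lam.length ×ˢ Finset.range (lam.foldr max 0)).filter
    (fun c => mu.getD c.1 0 ≤ c.2 ∧ c.2 < lam.getD c.1 0)

/-- A semistandard Young tableau of skew shape lam/mu: entries are positive integers,
rows weakly increase, columns strictly increase. -/
structure SkewSSYT (lam mu : List ℕ) where
  entry : ℕ × ℕ → ℕ
  outside : ∀ c ∉ skewCells lam mu, entry c = 0
  pos : ∀ c ∈ skewCells lam mu, 1 ≤ entry c
  rowWeak : ∀ i j, (i, j) ∈ skewCells lam mu → (i, j + 1) ∈ skewCells lam mu →
    entry (i, j) ≤ entry (i, j + 1)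
  colStrict : ∀ i j, (i, j) ∈ skewCells lam mu → (i + 1, j) ∈ skewCells lam mu →
    entry (i, j) < entry (i + 1, j)

/-- The skew Schur function s_{lam/mu} = ∑_T x^T, as a formal power series in the
variables x₁, x₂, … (indexed by ℕ; the variable `X k` records entries equal to `k`). -/
def skewSchur (lam mu : List ℕ) : MvPowerSeries ℕ ℚ :=
  fun m => (Nat.card {T : SkewSSYT lam mu //
    ∀ k, ((skewCells lam mu).filter (fun c => T.entry c = k)).card = m k} : ℚ)

/-- The cells of the shifted diagram of a strict partition `lam` (row `i` indented `i`). -/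
def shiftedCells (lam : List ℕ) : Finset (ℕ × ℕ) :=
  (Finset.range lam.length ×ˢ Finset.range (lam.length + lam.foldr max 0)).filter
    (fun c => c.1 ≤ c.2 ∧ c.2 < c.1 + lam.getD c.1 0)

/-- A shifted semistandard Young tableau of shifted shape `lam`, over the alphabet
1' < 1 < 2' < 2 < ⋯ encoded as natural numbers: the letter k' is `2k - 1` (odd) and the
letter k is `2k` (even), for k ≥ 1.  Rows and columns weakly increase; two equal adjacent
letters in a row must be unprimed (each k' occurs at most once per row) and two equal
adjacent letters in a column must be primed (each k occurs at most once per column);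
entries on the main diagonal are unprimed. -/
structure ShiftedSSYT (lam : List ℕ) where
  entry : ℕ × ℕ → ℕ
  outside : ∀ c ∉ shiftedCells lam, entry c = 0
  pos : ∀ c ∈ shiftedCells lam, 1 ≤ entry c
  rowWeak : ∀ i j, (i, j) ∈ shiftedCells lam → (i, j + 1) ∈ shiftedCells lam →
    entry (i, j) ≤ entry (i, j + 1)
  rowPrime : ∀ i j, (i, j) ∈ shiftedCells lam → (i, j + 1) ∈ shiftedCells lam →
    entry (i, j) = entry (i, j + 1) → Even (entry (i, j))
  colWeak : ∀ i j, (i, j) ∈ shiftedCells lam → (i + 1, j) ∈ shiftedCells lam →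
    entry (i, j) ≤ entry (i + 1, j)
  colPrime : ∀ i j, (i, j) ∈ shiftedCells lam → (i + 1, j) ∈ shiftedCells lam →
    entry (i, j) = entry (i + 1, j) → Odd (entry (i, j))
  diag : ∀ i, (i, i) ∈ shiftedCells lam → Even (entry (i, i))

/-- The Schur P-function P_lam = ∑_S x^S: the variable `X k` records the total number of
occurrences of the letters k and k' (encoded `2k` and `2k - 1`). -/
def schurP (lam : List ℕ) : MvPowerSeries ℕ ℚ :=
  fun m => (Nat.card {S : ShiftedSSYT lam //
    ∀ k, ((shiftedCells lam).filter (fun c => (S.entry c + 1) / 2 = k)).card = m k} : ℚ)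

/-- Valid ribbon fillings: `a b / c d / e`. -/
def RibOK : ℕ × ℕ × ℕ × ℕ × ℕ → Prop
  | (a, b, c, d, e) => 1 ≤ a ∧ 1 ≤ b ∧ 1 ≤ c ∧ 1 ≤ d ∧ 1 ≤ e ∧ a ≤ b ∧ c ≤ d ∧ a < d ∧ c < e

/-- Valid shifted fillings: `p q r / s t`. -/
def ShOK : ℕ × ℕ × ℕ × ℕ × ℕ → Prop
  | (p, q, r, s, t) => 1 ≤ p ∧ 1 ≤ q ∧ 1 ≤ r ∧ 1 ≤ s ∧ 1 ≤ t ∧ p ≤ q ∧ q ≤ r ∧ s ≤ t ∧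
      q ≤ s ∧ r ≤ t ∧ (q = r → q % 2 = 0) ∧ (q = s → q % 2 = 1) ∧ (r = t → r % 2 = 1) ∧
      p % 2 = 0 ∧ s % 2 = 0

/-- Weight of five values. -/
def wt : ℕ × ℕ × ℕ × ℕ × ℕ → ℕ → ℕ
  | (a, b, c, d, e), k => (if a = k then 1 else 0) + (if b = k then 1 else 0) +
      (if c = k then 1 else 0) + (if d = k then 1 else 0) + (if e = k then 1 else 0)

def absv : ℕ × ℕ × ℕ × ℕ × ℕ → ℕ × ℕ × ℕ × ℕ × ℕ
  | (a, b, c, d, e) => ((a + 1) / 2, (b + 1) / 2, (c + 1) / 2, (d + 1) / 2, (e + 1) / 2)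

def toSh : ℕ × ℕ × ℕ × ℕ × ℕ → ℕ × ℕ × ℕ × ℕ × ℕ
  | (a, b, c, d, e) =>
    if e ≤ b then
      if c ≤ a then
        if e ≤ a then
          if d ≤ b then
            (2 * c, 2 * e - 1, 2 * a, 2 * d, 2 * b)
          else
            (2 * c, 2 * e - 1, 2 * b, 2 * a, 2 * d)
        else
          if e ≤ d then
            if d ≤ b then
              (2 * c, 2 * a, 2 * e - 1, 2 * d, 2 * b)
            else
              (2 * c, 2 * a, 2 * b, 2 * e, 2 * d)
          else
            (2 * c, 2 * a, 2 * e - 1, 2 * d, 2 * b)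
      else
        if e ≤ d then
          if d ≤ b then
            (2 * a, 2 * c - 1, 2 * e - 1, 2 * d, 2 * b)
          else
            (2 * a, 2 * c - 1, 2 * e - 1, 2 * b, 2 * d - 1)
        else
          (2 * a, 2 * c - 1, 2 * e - 1, 2 * d, 2 * b)
    else
      if e ≤ d then
        if c ≤ a then
          (2 * c, 2 * a, 2 * b, 2 * e, 2 * d)
        else
          if c ≤ b then
            (2 * a, 2 * c - 1, 2 * e - 1, 2 * b, 2 * d - 1)
          else
            (2 * a, 2 * b, 2 * e - 1, 2 * c, 2 * d - 1)
      else
        if c ≤ a then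
          if d ≤ b then
            (2 * c, 2 * a, 2 * b, 2 * d, 2 * e - 1)
          else
            (2 * c, 2 * a, 2 * b, 2 * d, 2 * e - 1)
        else
          if c ≤ b then
            if d ≤ b then
              (2 * a, 2 * c - 1, 2 * b, 2 * d, 2 * e - 1)
            else
              (2 * a, 2 * c - 1, 2 * b, 2 * d, 2 * e - 1)
          else
            (2 * a, 2 * b, 2 * c - 1, 2 * d, 2 * e - 1)

def toRib : ℕ × ℕ × ℕ × ℕ × ℕ → ℕ × ℕ × ℕ × ℕ × ℕ
  | (p, q, r, s, t) =>
    if q % 2 = 0 then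
      if r % 2 = 0 then
        if t % 2 = 0 then
          if (r + 1) / 2 < (s + 1) / 2 then ((q + 1) / 2, (r + 1) / 2, (p + 1) / 2, (t + 1) / 2, (s + 1) / 2)
          else ((q + 1) / 2, (r + 1) / 2, (p + 1) / 2, (t + 1) / 2, (s + 1) / 2)
        else
          if (r + 1) / 2 < (s + 1) / 2 then ((q + 1) / 2, (r + 1) / 2, (p + 1) / 2, (s + 1) / 2, (t + 1) / 2)
          else ((q + 1) / 2, (r + 1) / 2, (p + 1) / 2, (s + 1) / 2, (t + 1) / 2)
      else
        if t % 2 = 0 then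
          if (r + 1) / 2 ≤ (s + 1) / 2 then ((q + 1) / 2, (t + 1) / 2, (p + 1) / 2, (s + 1) / 2, (r + 1) / 2)
          else ((q + 1) / 2, (t + 1) / 2, (p + 1) / 2, (s + 1) / 2, (r + 1) / 2)
        else
          if (r + 1) / 2 ≤ (s + 1) / 2 then ((p + 1) / 2, (q + 1) / 2, (r + 1) / 2, (s + 1) / 2, (t + 1) / 2)
          else ((p + 1) / 2, (q + 1) / 2, (s + 1) / 2, (t + 1) / 2, (r + 1) / 2)
    else
      if r % 2 = 0 then
        if t % 2 = 0 then
          if (r + 1) / 2 < (s + 1) / 2 then ((r + 1) / 2, (t + 1) / 2, (p + 1) / 2, (s + 1) / 2, (q + 1) / 2)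
          else ((s + 1) / 2, (r + 1) / 2, (p + 1) / 2, (t + 1) / 2, (q + 1) / 2)
        else
          if (r + 1) / 2 < (s + 1) / 2 then ((p + 1) / 2, (r + 1) / 2, (q + 1) / 2, (s + 1) / 2, (t + 1) / 2)
          else ((p + 1) / 2, (r + 1) / 2, (q + 1) / 2, (s + 1) / 2, (t + 1) / 2)
      else
        if t % 2 = 0 then
          if (r + 1) / 2 ≤ (s + 1) / 2 then ((p + 1) / 2, (t + 1) / 2, (q + 1) / 2, (s + 1) / 2, (r + 1) / 2)
          else ((p + 1) / 2, (t + 1) / 2, (q + 1) / 2, (s + 1) / 2, (r + 1) / 2)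
        else
          if (r + 1) / 2 ≤ (s + 1) / 2 then ((p + 1) / 2, (s + 1) / 2, (q + 1) / 2, (t + 1) / 2, (r + 1) / 2)
          else ((p + 1) / 2, (s + 1) / 2, (q + 1) / 2, (t + 1) / 2, (r + 1) / 2)

set_option maxHeartbeats 4000000
set_option linter.unusedSimpArgs false

theorem toSh_ok (x : ℕ × ℕ × ℕ × ℕ × ℕ) (h : RibOK x) : ShOK (toSh x) := by
  obtain ⟨a, b, c, d, e⟩ := x
  simp only [RibOK] at h
  simp only [toSh]
  split_ifs <;> simp only [ShOK] <;> omega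

theorem toRib_ok (x : ℕ × ℕ × ℕ × ℕ × ℕ) (h : ShOK x) : RibOK (toRib x) := by
  obtain ⟨p, q, r, s, t⟩ := x
  simp only [ShOK] at h
  simp only [toRib]
  split_ifs <;> simp only [RibOK] <;> omega

theorem toRib_toSh (x : ℕ × ℕ × ℕ × ℕ × ℕ) (h : RibOK x) : toRib (toSh x) = x := by
  obtain ⟨a, b, c, d, e⟩ := x
  simp only [RibOK] at h
  simp only [toSh]
  split_ifs <;> simp only [toRib] <;> split_ifs <;>
    first
    | (exfalso; omega)
    | (simp only [Prod.mk.injEq]; omega)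

theorem toSh_toRib (x : ℕ × ℕ × ℕ × ℕ × ℕ) (h : ShOK x) : toSh (toRib x) = x := by
  obtain ⟨p, q, r, s, t⟩ := x
  simp only [ShOK] at h
  simp only [toRib]
  split_ifs <;> simp only [toSh] <;> split_ifs <;>
    first
    | (exfalso; omega)
    | (simp only [Prod.mk.injEq]; omega)

theorem wt_toRib (x : ℕ × ℕ × ℕ × ℕ × ℕ) (k : ℕ) : wt (toRib x) k = wt (absv x) k := by
  obtain ⟨p, q, r, s, t⟩ := x
  simp only [toRib]
  split_ifs <;> simp only [wt, absv] <;> ring_nf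

theorem skewCells_eq : skewCells [3, 2, 1] [1] = {(0, 1), (0, 2), (1, 0), (1, 1), (2, 0)} := by
  decide

theorem shiftedCells_eq : shiftedCells [3, 2] = {(0, 0), (0, 1), (0, 2), (1, 1), (1, 2)} := by
  decide

def ribData (T : SkewSSYT [3, 2, 1] [1]) : ℕ × ℕ × ℕ × ℕ × ℕ :=
  (T.entry (0, 1), T.entry (0, 2), T.entry (1, 0), T.entry (1, 1), T.entry (2, 0))

def shData (T : ShiftedSSYT [3, 2]) : ℕ × ℕ × ℕ × ℕ × ℕ :=
  (T.entry (0, 0), T.entry (0, 1), T.entry (0, 2), T.entry (1, 1), T.entry (1, 2))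

theorem ribData_ok (T : SkewSSYT [3, 2, 1] [1]) : RibOK (ribData T) := by
  have hp := T.pos
  have hr := T.rowWeak
  have hc := T.colStrict
  simp only [skewCells_eq] at hp hr hc
  exact ⟨hp _ (by decide), hp _ (by decide), hp _ (by decide), hp _ (by decide), hp _ (by decide),
    hr 0 1 (by decide) (by decide), hr 1 0 (by decide) (by decide),
    hc 0 1 (by decide) (by decide), hc 1 0 (by decide) (by decide)⟩

theorem shData_ok (T : ShiftedSSYT [3, 2]) : ShOK (shData T) := by
  have hp := T.pos
  have hr := T.rowWeak
  have hc := T.colWeak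
  have hr' := T.rowPrime
  have hc' := T.colPrime
  have hd := T.diag
  simp only [shiftedCells_eq, Nat.even_iff, Nat.odd_iff] at hp hr hc hr' hc' hd
  exact ⟨hp _ (by decide), hp _ (by decide), hp _ (by decide), hp _ (by decide), hp _ (by decide),
    hr 0 0 (by decide) (by decide), hr 0 1 (by decide) (by decide), hr 1 1 (by decide) (by decide),
    hc 0 1 (by decide) (by decide), hc 0 2 (by decide) (by decide),
    hr' 0 1 (by decide) (by decide), hc' 0 1 (by decide) (by decide),
    hc' 0 2 (by decide) (by decide), hd 0 (by decide), hd 1 (by decide)⟩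

def mkRib (x : ℕ × ℕ × ℕ × ℕ × ℕ) (h : RibOK x) : SkewSSYT [3, 2, 1] [1] where
  entry := fun
    | (0, 1) => x.1
    | (0, 2) => x.2.1
    | (1, 0) => x.2.2.1
    | (1, 1) => x.2.2.2.1
    | (2, 0) => x.2.2.2.2
    | _ => 0
  outside := by
    rw [skewCells_eq]
    intro c hc
    split <;> first | rfl | (exfalso; revert hc; decide)
  pos := by
    obtain ⟨a, b, c, d, e⟩ := x
    simp only [RibOK] at h
    rw [skewCells_eq]
    intro c hc
    simp only [Finset.mem_insert, Finset.mem_singleton] at hc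
    rcases hc with rfl | rfl | rfl | rfl | rfl <;> simp only <;> omega
  rowWeak := by
    obtain ⟨a, b, c, d, e⟩ := x
    simp only [RibOK] at h
    rw [skewCells_eq]
    intro i j hc hc'
    simp only [Finset.mem_insert, Finset.mem_singleton, Prod.mk.injEq] at hc hc'
    rcases hc with ⟨rfl, rfl⟩ | ⟨rfl, rfl⟩ | ⟨rfl, rfl⟩ | ⟨rfl, rfl⟩ | ⟨rfl, rfl⟩ <;>
      first | (exfalso; omega) | (simp only; omega)
  colStrict := by
    obtain ⟨a, b, c, d, e⟩ := x
    simp only [RibOK] at h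
    rw [skewCells_eq]
    intro i j hc hc'
    simp only [Finset.mem_insert, Finset.mem_singleton, Prod.mk.injEq] at hc hc'
    rcases hc with ⟨rfl, rfl⟩ | ⟨rfl, rfl⟩ | ⟨rfl, rfl⟩ | ⟨rfl, rfl⟩ | ⟨rfl, rfl⟩ <;>
      first | (exfalso; omega) | (simp only; omega)

def mkSh (x : ℕ × ℕ × ℕ × ℕ × ℕ) (h : ShOK x) : ShiftedSSYT [3, 2] where
  entry := fun
    | (0, 0) => x.1
    | (0, 1) => x.2.1
    | (0, 2) => x.2.2.1
    | (1, 1) => x.2.2.2.1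
    | (1, 2) => x.2.2.2.2
    | _ => 0
  outside := by
    rw [shiftedCells_eq]
    intro c hc
    split <;> first | rfl | (exfalso; revert hc; decide)
  pos := by
    obtain ⟨a, b, c, d, e⟩ := x
    simp only [ShOK] at h
    rw [shiftedCells_eq]
    intro c hc
    simp only [Finset.mem_insert, Finset.mem_singleton] at hc
    rcases hc with rfl | rfl | rfl | rfl | rfl <;> simp only <;> omega
  rowWeak := by
    obtain ⟨a, b, c, d, e⟩ := x
    simp only [ShOK] at h
    rw [shiftedCells_eq]
    intro i j hc hc'
    simp only [Finset.mem_insert, Finset.mem_singleton, Prod.mk.injEq] at hc hc'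
    rcases hc with ⟨rfl, rfl⟩ | ⟨rfl, rfl⟩ | ⟨rfl, rfl⟩ | ⟨rfl, rfl⟩ | ⟨rfl, rfl⟩ <;>
      first | (exfalso; omega) | (simp only [Nat.even_iff, Nat.odd_iff]; omega)
  rowPrime := by
    obtain ⟨a, b, c, d, e⟩ := x
    simp only [ShOK] at h
    rw [shiftedCells_eq]
    intro i j hc hc'
    simp only [Finset.mem_insert, Finset.mem_singleton, Prod.mk.injEq] at hc hc'
    rcases hc with ⟨rfl, rfl⟩ | ⟨rfl, rfl⟩ | ⟨rfl, rfl⟩ | ⟨rfl, rfl⟩ | ⟨rfl, rfl⟩ <;>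
      first | (exfalso; omega) | (simp only [Nat.even_iff, Nat.odd_iff]; omega)
  colWeak := by
    obtain ⟨a, b, c, d, e⟩ := x
    simp only [ShOK] at h
    rw [shiftedCells_eq]
    intro i j hc hc'
    simp only [Finset.mem_insert, Finset.mem_singleton, Prod.mk.injEq] at hc hc'
    rcases hc with ⟨rfl, rfl⟩ | ⟨rfl, rfl⟩ | ⟨rfl, rfl⟩ | ⟨rfl, rfl⟩ | ⟨rfl, rfl⟩ <;>
      first | (exfalso; omega) | (simp only [Nat.even_iff, Nat.odd_iff]; omega)
  colPrime := by
    obtain ⟨a, b, c, d, e⟩ := x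
    simp only [ShOK] at h
    rw [shiftedCells_eq]
    intro i j hc hc'
    simp only [Finset.mem_insert, Finset.mem_singleton, Prod.mk.injEq] at hc hc'
    rcases hc with ⟨rfl, rfl⟩ | ⟨rfl, rfl⟩ | ⟨rfl, rfl⟩ | ⟨rfl, rfl⟩ | ⟨rfl, rfl⟩ <;>
      first | (exfalso; omega) | (simp only [Nat.even_iff, Nat.odd_iff]; omega)
  diag := by
    obtain ⟨a, b, c, d, e⟩ := x
    simp only [ShOK] at h
    rw [shiftedCells_eq]
    intro i hc
    simp only [Finset.mem_insert, Finset.mem_singleton, Prod.mk.injEq] at hc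
    rcases hc with ⟨rfl, hj⟩ | ⟨rfl, hj⟩ | ⟨rfl, hj⟩ | ⟨rfl, hj⟩ | ⟨rfl, hj⟩ <;>
      first | (exfalso; omega) | (simp only [Nat.even_iff]; omega)

theorem ribData_inj (T U : SkewSSYT [3, 2, 1] [1]) (h : ribData T = ribData U) : T = U := by
  have hT := T.outside
  have hU := U.outside
  have key : T.entry = U.entry := by
    funext c
    by_cases hc : c ∈ skewCells [3, 2, 1] [1]
    · rw [skewCells_eq] at hc
      simp only [ribData, Prod.mk.injEq] at h
      simp only [Finset.mem_insert, Finset.mem_singleton] at hc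
      rcases hc with rfl | rfl | rfl | rfl | rfl <;> simp only [h]
    · rw [hT c hc, hU c hc]
  cases T
  cases U
  simp only at key
  subst key
  rfl

theorem shData_inj (T U : ShiftedSSYT [3, 2]) (h : shData T = shData U) : T = U := by
  have hT := T.outside
  have hU := U.outside
  have key : T.entry = U.entry := by
    funext c
    by_cases hc : c ∈ shiftedCells [3, 2]
    · rw [shiftedCells_eq] at hc
      simp only [shData, Prod.mk.injEq] at h
      simp only [Finset.mem_insert, Finset.mem_singleton] at hc
      rcases hc with rfl | rfl | rfl | rfl | rfl <;> simp only [h]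
    · rw [hT c hc, hU c hc]
  cases T
  cases U
  simp only at key
  subst key
  rfl

theorem rib_wt (T : SkewSSYT [3, 2, 1] [1]) (k : ℕ) :
    ((skewCells [3, 2, 1] [1]).filter (fun c => T.entry c = k)).card = wt (ribData T) k := by
  rw [skewCells_eq, Finset.card_filter]
  rw [Finset.sum_insert (by decide), Finset.sum_insert (by decide),
    Finset.sum_insert (by decide), Finset.sum_insert (by decide), Finset.sum_singleton]
  simp only [wt, ribData, add_assoc]
  rfl

theorem sh_wt (T : ShiftedSSYT [3, 2]) (k : ℕ) :
    ((shiftedCells [3, 2]).filter (fun c => (T.entry c + 1) / 2 = k)).card =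
      wt (absv (shData T)) k := by
  rw [shiftedCells_eq, Finset.card_filter]
  rw [Finset.sum_insert (by decide), Finset.sum_insert (by decide),
    Finset.sum_insert (by decide), Finset.sum_insert (by decide), Finset.sum_singleton]
  simp only [wt, shData, absv, add_assoc]
  rfl

/-- The weight-preserving bijection. -/
def mainEquiv : SkewSSYT [3, 2, 1] [1] ≃ ShiftedSSYT [3, 2] where
  toFun T := mkSh (toSh (ribData T)) (toSh_ok _ (ribData_ok T))
  invFun S := mkRib (toRib (shData S)) (toRib_ok _ (shData_ok S))
  left_inv T := ribData_inj _ _ (toRib_toSh _ (ribData_ok T))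
  right_inv S := shData_inj _ _ (toSh_toRib _ (shData_ok S))

theorem mainEquiv_data (T : SkewSSYT [3, 2, 1] [1]) :
    shData (mainEquiv T) = toSh (ribData T) := rfl

theorem skewSchur_staircase_321_1 :
    skewSchur [3, 2, 1] [1] = schurP [3, 2] := by
  funext m
  unfold skewSchur schurP
  congr 1
  refine Nat.card_congr (mainEquiv.subtypeEquiv fun T => ?_)
  refine forall_congr' fun k => ?_
  rw [rib_wt, sh_wt, mainEquiv_data, ← wt_toRib, toRib_toSh _ (ribData_ok T)]

end
end

section
/- The skew Schur function s_{δ_4/δ_2} = s_{(4,3,2,1)/(2,1)} equals P_{(4,3)} + P_{(4,2,1)}, as an identity of formal power series in x₁, x₂, …. -/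
/-!
STATEMENT 11: s_{δ₄/δ₂} = s_{(4,3,2,1)/(2,1)} = P_{(4,3)} + P_{(4,2,1)}.
-/

noncomputable section

/-! ### Words with local constraints -/

/-- Constraint on a letter to be appended to a word: `d` says that it must be unprimed, `l`, `u`
and `r` are the positions (in the reversed prefix) of the left, upper and right neighbours.
Letters are zero-based: `2k` is primed and `2k+1` is unprimed. -/
structure Cst where
  d : Bool
  l : Option ℕ
  u : Option ℕ
  r : Option ℕ

/-- Evaluate `f` at the entry number `i` of `p`, `true` if there is none. -/
def onNth (p : List ℕ) (f : ℕ → Bool) : ℕ → Bool :=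
  List.rec (fun _ => true) (fun a _ ih n => Nat.rec (f a) (fun k _ => ih k) n) p

def nth (l : List ℕ) : ℕ → ℕ :=
  List.rec (fun _ => 0) (fun a _ ih n => Nat.rec a (fun k _ => ih k) n) l

def dec (l : List ℕ) : ℕ → List ℕ :=
  List.rec (fun _ => []) (fun a t ih n => Nat.rec (Nat.pred a :: t) (fun k _ => a :: ih k) n) l

def okO (o : Option ℕ) (f : ℕ → Bool) : Bool := Option.rec true f o

def Cst.ok1 (c : Cst) (p : List ℕ) (x : ℕ) : Bool :=
  bif okO c.l (onNth p fun y => Nat.ble y x) then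
  bif okO c.u (onNth p fun y => Nat.ble (Nat.succ y) x) then
  okO c.r (onNth p fun y => Nat.ble x y) else false else false

def Cst.ok0 (c : Cst) (p : List ℕ) (x : ℕ) : Bool :=
  bif okO c.l (onNth p fun y => Nat.ble (Nat.succ y) x) then
  bif okO c.u (onNth p fun y => Nat.ble y x) then
  okO c.r (onNth p fun y => Nat.ble (Nat.succ x) y) else false else false

/-- Counting by search. -/
def cnt (rng : List ℕ) (ss : List Cst) : List ℕ → List ℕ → ℕ :=
  List.rec (fun _ _ => 1) (fun s _ ih p c => List.rec 0 (fun k _ acc =>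
      bif Nat.beq (nth c k) 0 then acc else
      Nat.add (bif s.ok1 p (Nat.succ (Nat.mul 2 k)) then
          ih (Nat.succ (Nat.mul 2 k) :: p) (dec c k) else 0)
        (bif s.d then acc else
          bif s.ok0 p (Nat.mul 2 k) then Nat.add (ih (Nat.mul 2 k :: p) (dec c k)) acc
          else acc)) rng) ss

def specZ : List Cst :=
  [⟨true, none, none, none⟩, ⟨true, none, none, some 0⟩, ⟨true, none, some 0, none⟩,
   ⟨true, none, none, some 0⟩, ⟨true, none, some 0, none⟩, ⟨true, none, none, some 0⟩,
   ⟨true, none, some 0, none⟩]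

def spec43 : List Cst :=
  [⟨true, none, none, none⟩, ⟨false, some 0, none, none⟩, ⟨true, none, some 0, none⟩,
   ⟨false, some 1, none, none⟩, ⟨false, some 1, some 0, none⟩, ⟨false, some 1, none, none⟩,
   ⟨false, some 1, some 0, none⟩]

def spec421 : List Cst :=
  [⟨true, none, none, none⟩, ⟨false, some 0, none, none⟩, ⟨true, none, some 0, none⟩,
   ⟨false, some 1, none, none⟩, ⟨false, some 1, some 0, none⟩, ⟨true, none, some 0, none⟩,
   ⟨false, some 2, none, none⟩]

/-- Compositions of `n` (with fuel). -/
def comps : ℕ → ℕ → List (List ℕ)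
  | 0, _ => []
  | _+1, 0 => [[]]
  | f+1, n+1 => (List.range (n+1)).flatMap fun i => (comps f (n - i)).map (fun l => (i+1) :: l)

def good (c : List ℕ) : Bool :=
  Nat.beq (cnt (List.take c.length [0,1,2,3,4,5,6]) specZ [] c)
    (cnt (List.take c.length [0,1,2,3,4,5,6]) spec43 [] c +
      cnt (List.take c.length [0,1,2,3,4,5,6]) spec421 [] c)

set_option maxRecDepth 100000 in
theorem comps_good : (comps 8 7).all good = true := by decide +kernel

theorem mem_comps : ∀ (f n : ℕ) (c : List ℕ), n < f → (∀ a ∈ c, 0 < a) → c.sum = n →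
    c ∈ comps f n
  | 0, _, _, h, _, _ => by omega
  | f+1, 0, [], _, _, _ => by simp [comps]
  | f+1, 0, a :: c, _, h, hs => by
      have := h a (by simp)
      simp at hs
      omega
  | f+1, n+1, [], _, _, hs => by simp at hs
  | f+1, n+1, a :: c, hf, h, hs => by
      have h1 := h a (by simp)
      simp only [List.sum_cons] at hs
      simp only [comps, List.mem_flatMap, List.mem_range, List.mem_map]
      refine ⟨a - 1, by omega, c, ?_, by congr 1; omega⟩
      exact mem_comps f _ c (by omega) (fun b hb => h b (by simp [hb])) (by omega)

/-- The constraint as a proposition. -/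
def Cst.OK (s : Cst) (p : List ℕ) (x : ℕ) : Prop :=
  (s.d = true → x % 2 = 1) ∧
  (∀ i ∈ s.l, ∀ y ∈ p[i]?, y < x ∨ (y = x ∧ x % 2 = 1)) ∧
  (∀ i ∈ s.u, ∀ y ∈ p[i]?, y < x ∨ (y = x ∧ x % 2 = 0)) ∧
  (∀ i ∈ s.r, ∀ y ∈ p[i]?, x < y ∨ (x = y ∧ x % 2 = 1))

def valid : List Cst → List ℕ → List ℕ → Prop
  | [], _, [] => True
  | s :: ss, p, x :: w => s.OK p x ∧ valid ss (x :: p) w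
  | _, _, _ => False

theorem onNth_iff (p : List ℕ) (f : ℕ → Bool) (i : ℕ) :
    onNth p f i = true ↔ ∀ y ∈ p[i]?, f y = true := by
  induction p generalizing i with
  | nil => simp [onNth]
  | cons a t ih =>
    cases i with
    | zero => simp [onNth]
    | succ i =>
      rw [List.getElem?_cons_succ]
      exact ih i

theorem okO_iff (o : Option ℕ) (f : ℕ → Bool) : okO o f = true ↔ ∀ i ∈ o, f i = true := by
  cases o <;> simp [okO]

theorem nth_eq (l : List ℕ) (i : ℕ) : nth l i = l.getD i 0 := by
  induction l generalizing i with
  | nil => simp [nth]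
  | cons a t ih =>
    cases i with
    | zero => simp [nth]
    | succ i =>
      rw [List.getD_cons_succ]
      exact ih i

theorem nth_dec (l : List ℕ) (i j : ℕ) :
    nth (dec l i) j = if i = j then nth l j - 1 else nth l j := by
  induction l generalizing i j with
  | nil => simp [nth, dec]
  | cons a t ih =>
    cases i with
    | zero => cases j <;> simp [nth, dec]
    | succ i =>
      cases j with
      | zero => simp [nth, dec]
      | succ j =>
        simp only [Nat.add_right_cancel_iff]
        exact ih i j

theorem sum_dec (l : List ℕ) (i : ℕ) (h : nth l i ≠ 0) : (dec l i).sum + 1 = l.sum := by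
  induction l generalizing i with
  | nil => simp [nth] at h
  | cons a t ih =>
    cases i with
    | zero =>
      simp [nth] at h
      simp [dec]; omega
    | succ i =>
      have := ih i h
      change (a :: dec t i).sum + 1 = _
      simp; omega

theorem length_dec (l : List ℕ) (i : ℕ) : (dec l i).length = l.length := by
  induction l generalizing i with
  | nil => simp [dec]
  | cons a t ih =>
    cases i with
    | zero => simp [dec]
    | succ i =>
      change (a :: dec t i).length = _
      simp [ih]

theorem ok1_iff (s : Cst) (p : List ℕ) (k : ℕ) :
    s.ok1 p (2 * k + 1) = true ↔ s.OK p (2 * k + 1) := by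
  have h : (2 * k + 1) % 2 = 1 := by omega
  have e1 : ∀ y, (y < 2 * k + 1 ∨ (y = 2 * k + 1 ∧ (2 * k + 1) % 2 = 1)) ↔
    Nat.ble y (2 * k + 1) = true := by intro y; rw [Nat.ble_eq]; omega
  have e2 : ∀ y, (y < 2 * k + 1 ∨ (y = 2 * k + 1 ∧ (2 * k + 1) % 2 = 0)) ↔
    Nat.ble (Nat.succ y) (2 * k + 1) = true := by intro y; rw [Nat.ble_eq]; omega
  have e3 : ∀ y, (2 * k + 1 < y ∨ (2 * k + 1 = y ∧ (2 * k + 1) % 2 = 1)) ↔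
    Nat.ble (2 * k + 1) y = true := by intro y; rw [Nat.ble_eq]; omega
  simp only [Cst.OK, e1, e2, e3, ← onNth_iff, ← okO_iff]
  simp only [Cst.ok1, h, implies_true, true_and]
  generalize okO s.l _ = a
  generalize okO s.u _ = b
  generalize okO s.r _ = c
  cases a <;> cases b <;> cases c <;> decide

theorem ok0_iff (s : Cst) (p : List ℕ) (k : ℕ) (hd : s.d = false) :
    s.ok0 p (2 * k) = true ↔ s.OK p (2 * k) := by
  have e1 : ∀ y, (y < 2 * k ∨ (y = 2 * k ∧ (2 * k) % 2 = 1)) ↔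
    Nat.ble (Nat.succ y) (2 * k) = true := by intro y; rw [Nat.ble_eq]; omega
  have e2 : ∀ y, (y < 2 * k ∨ (y = 2 * k ∧ (2 * k) % 2 = 0)) ↔
    Nat.ble y (2 * k) = true := by intro y; rw [Nat.ble_eq]; omega
  have e3 : ∀ y, (2 * k < y ∨ (2 * k = y ∧ (2 * k) % 2 = 1)) ↔
    Nat.ble (Nat.succ (2 * k)) y = true := by intro y; rw [Nat.ble_eq]; omega
  simp only [Cst.OK, e1, e2, e3, ← onNth_iff, ← okO_iff]
  simp only [Cst.ok0, hd, Bool.false_eq_true, false_implies, true_and]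
  generalize okO s.l _ = a
  generalize okO s.u _ = b
  generalize okO s.r _ = c
  cases a <;> cases b <;> cases c <;> decide

/-- The words counted by the search. -/
def gen (rng : List ℕ) : List Cst → List ℕ → List ℕ → List (List ℕ)
  | [], _, _ => [[]]
  | s :: ss, p, c => rng.flatMap fun k =>
      if nth c k = 0 then [] else
      (if s.ok1 p (2 * k + 1) = true then
        (gen rng ss ((2 * k + 1) :: p) (dec c k)).map (fun w => (2 * k + 1) :: w) else []) ++
      (if s.d = true then [] else if s.ok0 p (2 * k) = true then
        (gen rng ss ((2 * k) :: p) (dec c k)).map (fun w => (2 * k) :: w) else [])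

theorem cnt_eq (rng : List ℕ) (ss : List Cst) (p c : List ℕ) :
    cnt rng ss p c = (gen rng ss p c).length := by
  induction ss generalizing p c with
  | nil => simp [cnt, gen]
  | cons s ss ih =>
    simp only [gen]
    have key : ∀ r : List ℕ, (List.rec 0 (fun k _ acc =>
      bif Nat.beq (nth c k) 0 then acc else
      Nat.add (bif s.ok1 p (Nat.succ (Nat.mul 2 k)) then
          cnt rng ss (Nat.succ (Nat.mul 2 k) :: p) (dec c k) else 0)
        (bif s.d then acc else
          bif s.ok0 p (Nat.mul 2 k) then Nat.add (cnt rng ss (Nat.mul 2 k :: p) (dec c k)) acc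
          else acc)) r : ℕ) = (r.flatMap fun k =>
      if nth c k = 0 then [] else
      (if s.ok1 p (2 * k + 1) = true then
        (gen rng ss ((2 * k + 1) :: p) (dec c k)).map (fun w => (2 * k + 1) :: w) else []) ++
      (if s.d = true then [] else if s.ok0 p (2 * k) = true then
        (gen rng ss ((2 * k) :: p) (dec c k)).map (fun w => (2 * k) :: w) else [])).length := by
      intro r
      induction r with
      | nil => simp
      | cons k r ihr =>
        simp only [List.flatMap_cons, List.length_append, ← ihr]
        simp only [Bool.cond_eq_ite, Nat.beq_eq, Nat.succ_eq_add_one, Nat.mul_eq, Nat.add_eq, ih]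
        split_ifs <;> simp <;> omega
    exact key rng

theorem mem_gen (n : ℕ) (ss : List Cst) (p c w : List ℕ) (hn : c.length = n)
    (hs : c.sum = ss.length) :
    w ∈ gen (List.range n) ss p c ↔
      valid ss p w ∧ ∀ k, w.countP (fun x => x / 2 = k) = nth c k := by
  induction ss generalizing p c w with
  | nil =>
    have hc : ∀ k, nth c k = 0 := by
      intro k
      by_contra h
      have := sum_dec c k h
      simp at hs
      omega
    cases w <;> simp [gen, valid, hc]
  | cons s ss ih =>
    have hlt : ∀ k, nth c k ≠ 0 → k < n := by
      intro k hk
      by_contra h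
      apply hk
      rw [nth_eq, List.getD_eq_default]
      omega
    have step : ∀ x w', nth c (x / 2) ≠ 0 →
        (w' ∈ gen (List.range n) ss (x :: p) (dec c (x / 2)) ↔
        valid ss (x :: p) w' ∧ ∀ k, (x :: w').countP (fun x => x / 2 = k) = nth c k) := by
      intro x w' h
      rw [ih _ _ _ (by rw [length_dec, hn]) (by
        have := sum_dec c _ h
        simp at hs
        omega)]
      refine and_congr_right fun _ => forall_congr' fun k => ?_
      rw [nth_dec, List.countP_cons]
      by_cases hk : x / 2 = k
      · subst hk
        simp
        omega
      · simp [hk]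
    cases w with
    | nil =>
      simp only [valid, false_and, iff_false, gen, List.mem_flatMap]
      rintro ⟨k, -, h⟩
      split_ifs at h <;> simp at h
    | cons x w' =>
      simp only [valid, gen, List.mem_flatMap, List.mem_range]
      constructor
      · rintro ⟨k, hk, h⟩
        by_cases h0 : nth c k = 0
        · simp [h0] at h
        rw [if_neg h0, List.mem_append] at h
        rcases h with h | h
        · by_cases h1 : s.ok1 p (2 * k + 1) = true
          · rw [if_pos h1, List.mem_map] at h
            obtain ⟨w1, hw1, e⟩ := h
            obtain ⟨rfl, rfl⟩ := List.cons.inj e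
            have e2 : (2 * k + 1) / 2 = k := by omega
            have := (step (2 * k + 1) w1 (by rwa [e2])).1 (by rwa [e2])
            exact ⟨⟨(ok1_iff s p k).1 h1, this.1⟩, this.2⟩
          · simp [h1] at h
        · by_cases hd : s.d = true
          · simp [hd] at h
          rw [if_neg hd] at h
          by_cases h1 : s.ok0 p (2 * k) = true
          · rw [if_pos h1, List.mem_map] at h
            obtain ⟨w1, hw1, e⟩ := h
            obtain ⟨rfl, rfl⟩ := List.cons.inj e
            have e2 : (2 * k) / 2 = k := by omega
            have := (step (2 * k) w1 (by rwa [e2])).1 (by rwa [e2])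
            exact ⟨⟨(ok0_iff s p k (by simpa using hd)).1 h1, this.1⟩, this.2⟩
          · simp [h1] at h
      · rintro ⟨⟨h1, h2⟩, h3⟩
        have h0 : nth c (x / 2) ≠ 0 := by
          rw [← h3]
          simp
        refine ⟨x / 2, hlt _ h0, ?_⟩
        rw [if_neg h0, List.mem_append]
        have := (step x w' h0).2 ⟨h2, h3⟩
        rcases Nat.mod_two_eq_zero_or_one x with hx | hx
        · right
          have e : 2 * (x / 2) = x := by omega
          have hd : s.d = false := by
            by_contra hd
            have := h1.1 (by simpa using hd)
            omega
          rw [if_neg (by simp [hd]), if_pos ((ok0_iff s p _ hd).2 (by rwa [e])), e]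
          exact List.mem_map.2 ⟨w', this, rfl⟩
        · left
          have e : 2 * (x / 2) + 1 = x := by omega
          rw [if_pos ((ok1_iff s p _).2 (by rwa [e])), e]
          exact List.mem_map.2 ⟨w', this, rfl⟩

theorem nodup_gen (rng : List ℕ) (hr : rng.Nodup) (ss : List Cst) (p c : List ℕ) :
    (gen rng ss p c).Nodup := by
  induction ss generalizing p c with
  | nil => simp [gen]
  | cons s ss ih =>
    have inj : ∀ x : ℕ, Function.Injective (fun w : List ℕ => x :: w) := fun x a b h => by
      simpa using h
    simp only [gen]
    rw [List.nodup_flatMap]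
    constructor
    · intro k _
      split_ifs
      all_goals try simp only [List.append_nil, List.nil_append, List.nodup_nil]
      all_goals first
        | exact (ih _ _).map (inj _)
        | skip
      refine List.Nodup.append ((ih _ _).map (inj _)) ((ih _ _).map (inj _)) ?_
      intro a h1 h2
      simp only [List.mem_map] at h1 h2
      obtain ⟨a1, _, rfl⟩ := h1
      obtain ⟨a2, _, e⟩ := h2
      have := (List.cons.inj e).1
      omega
    · refine hr.imp ?_
      intro k k' hk a h1 h2
      have aux : ∀ k, a ∈ (if nth c k = 0 then [] else
        (if s.ok1 p (2 * k + 1) = true then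
          (gen rng ss ((2 * k + 1) :: p) (dec c k)).map (fun w => (2 * k + 1) :: w) else []) ++
        (if s.d = true then [] else if s.ok0 p (2 * k) = true then
          (gen rng ss ((2 * k) :: p) (dec c k)).map (fun w => (2 * k) :: w) else [])) →
          a.headD 0 / 2 = k := by
        intro k h
        split_ifs at h <;> simp only [List.append_nil, List.nil_append, List.mem_append,
          List.mem_map, List.not_mem_nil] at h
        all_goals first
          | refine Or.elim h ?_ ?_
            · rintro ⟨w, _, rfl⟩
              change (2 * k + 1) / 2 = k
              omega
            · rintro ⟨w, _, rfl⟩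
              change (2 * k) / 2 = k
              omega
          | obtain ⟨w, _, rfl⟩ := h
            first
              | change (2 * k + 1) / 2 = k
                omega
              | change (2 * k) / 2 = k
                omega
      exact hk ((aux k h1).symm.trans (aux k' h2))

/-- Words satisfying the constraints, with given content. -/
def WS (ss : List Cst) (c : ℕ → ℕ) : Set (List ℕ) :=
  {w | valid ss [] w ∧ ∀ k, w.countP (fun x => x / 2 = k) = c k}

theorem valid_map (φ : ℕ → ℕ) (S : ℕ → Prop)
    (mono : ∀ x y, S x → S y → x < y → φ x < φ y) (par : ∀ x, φ x % 2 = x % 2) :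
    ∀ (ss : List Cst) (p w : List ℕ), (∀ x ∈ p, S x) → (∀ x ∈ w, S x) → valid ss p w →
      valid ss (p.map φ) (w.map φ)
  | [], _, [], _, _, _ => by simp [valid]
  | [], _, _ :: _, _, _, h => by simp [valid] at h
  | _ :: _, _, [], _, _, h => by simp [valid] at h
  | s :: ss, p, x :: w, hp, hw, h => by
      obtain ⟨⟨h1, h2, h3, h4⟩, h5⟩ := h
      have hx : S x := hw x (by simp)
      have hp' : ∀ i y, y ∈ p[i]? → S y := fun i y hy =>
        hp y (List.mem_of_getElem? (Option.mem_def.1 hy))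
      refine ⟨⟨fun hd => by rw [par]; exact h1 hd, ?_, ?_, ?_⟩, ?_⟩
      · intro i hi y hy
        rw [List.getElem?_map, Option.mem_map] at hy
        obtain ⟨z, hz, rfl⟩ := hy
        rw [par]
        rcases h2 i hi z hz with h | ⟨rfl, h⟩
        · exact Or.inl (mono _ _ (hp' i z hz) hx h)
        · exact Or.inr ⟨rfl, h⟩
      · intro i hi y hy
        rw [List.getElem?_map, Option.mem_map] at hy
        obtain ⟨z, hz, rfl⟩ := hy
        rw [par]
        rcases h3 i hi z hz with h | ⟨rfl, h⟩
        · exact Or.inl (mono _ _ (hp' i z hz) hx h)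
        · exact Or.inr ⟨rfl, h⟩
      · intro i hi y hy
        rw [List.getElem?_map, Option.mem_map] at hy
        obtain ⟨z, hz, rfl⟩ := hy
        rw [par]
        rcases h4 i hi z hz with h | ⟨rfl, h⟩
        · exact Or.inl (mono _ _ hx (hp' i z hz) h)
        · exact Or.inr ⟨rfl, h⟩
      · have := valid_map φ S mono par ss (x :: p) w (by
          intro y hy
          rcases List.mem_cons.1 hy with rfl | hy
          · exact hx
          · exact hp y hy) (fun y hy => hw y (by simp [hy])) h5
        simpa using this

theorem mem_content {w : List ℕ} {c : ℕ → ℕ}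
    (h : ∀ k, w.countP (fun x => x / 2 = k) = c k) {x : ℕ} (hx : x ∈ w) : c (x / 2) ≠ 0 := by
  rw [← h]
  have : 0 < w.countP (fun y => y / 2 = x / 2) := by
    rw [List.countP_pos_iff]
    exact ⟨x, hx, by simp⟩
  omega

open Classical in
theorem pack (c : ℕ → ℕ) (hf : (Set.ofPred fun k => c k ≠ 0).Finite) :
    ∃ L : List ℕ, (∀ a ∈ L, 0 < a) ∧ ∀ ss, (WS ss c).ncard = (WS ss (nth L)).ncard := by
  set P : ℕ → Prop := fun k => c k ≠ 0 with hP
  set l := hf.toFinset.card with hl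
  let L : List ℕ := (List.range l).map (fun j => c (Nat.nth P j))
  have hL : ∀ j, nth L j = if j < l then c (Nat.nth P j) else 0 := by
    intro j
    rw [nth_eq]
    by_cases hj : j < l
    · simp [L, hj]
    · simp [L, hj]
  have hmem : ∀ j, j < l → P (Nat.nth P j) := fun j hj => Nat.nth_mem_of_lt_card hf hj
  refine ⟨L, ?_, fun ss => ?_⟩
  · intro a ha
    simp only [L, List.mem_map, List.mem_range] at ha
    obtain ⟨j, hj, rfl⟩ := ha
    exact Nat.pos_of_ne_zero (hmem j hj)
  let φ : ℕ → ℕ := fun x => 2 * Nat.count P (x / 2) + x % 2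
  let ψ : ℕ → ℕ := fun x => 2 * Nat.nth P (x / 2) + x % 2
  have φ2 : ∀ x, φ x / 2 = Nat.count P (x / 2) := by intro x; simp only [φ]; omega
  have ψ2 : ∀ x, ψ x / 2 = Nat.nth P (x / 2) := by intro x; simp only [ψ]; omega
  have φm : ∀ x, φ x % 2 = x % 2 := by intro x; simp only [φ]; omega
  have ψm : ∀ x, ψ x % 2 = x % 2 := by intro x; simp only [ψ]; omega
  have hcl : ∀ k, P k → Nat.count P k < l := fun k hk => Nat.count_lt_card hf hk
  have ψφ : ∀ x, P (x / 2) → ψ (φ x) = x := by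
    intro x hx
    have h1 := ψ2 (φ x)
    have h2 := ψm (φ x)
    rw [φ2, Nat.nth_count hx] at h1
    rw [φm] at h2
    omega
  have φψ : ∀ x, x / 2 < l → φ (ψ x) = x := by
    intro x hx
    have h1 := φ2 (ψ x)
    have h2 := φm (ψ x)
    rw [ψ2, Nat.count_nth_of_lt_card_finite hf hx] at h1
    rw [ψm] at h2
    omega
  have φmono : ∀ x y, P (x / 2) → P (y / 2) → x < y → φ x < φ y := by
    intro x y hx hy hxy
    rcases Nat.lt_or_ge (x / 2) (y / 2) with h | h
    · have := Nat.count_strict_mono hx h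
      simp only [φ]
      omega
    · have e : x / 2 = y / 2 := by omega
      simp only [φ, e]
      omega
  have ψmono : ∀ x y, x / 2 < l → y / 2 < l → x < y → ψ x < ψ y := by
    intro x y hx hy hxy
    rcases Nat.lt_or_ge (x / 2) (y / 2) with h | h
    · have := Nat.nth_lt_nth_of_lt_card hf h hy
      simp only [ψ]
      omega
    · have e : x / 2 = y / 2 := by omega
      simp only [ψ, e]
      omega
  have hSL : ∀ w ∈ WS ss (nth L), ∀ x ∈ w, x / 2 < l := by
    intro w hw x hx
    have := mem_content hw.2 hx
    rw [hL] at this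
    by_contra h
    simp [h] at this
  have hSc : ∀ w ∈ WS ss c, ∀ x ∈ w, P (x / 2) := fun w hw x hx => mem_content hw.2 hx
  have hbij : Set.BijOn (List.map φ) (WS ss c) (WS ss (nth L)) := by
    refine Set.InvOn.bijOn (f' := List.map ψ) ⟨?_, ?_⟩ ?_ ?_
    · intro w hw
      rw [List.map_map]
      conv_rhs => rw [← List.map_id w]
      exact List.map_congr_left fun x hx => ψφ x (hSc w hw x hx)
    · intro w hw
      rw [List.map_map]
      conv_rhs => rw [← List.map_id w]
      exact List.map_congr_left fun x hx => φψ x (hSL w hw x hx)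
    · intro w hw
      refine ⟨valid_map φ (fun x => P (x / 2)) φmono φm ss [] w (by simp) (hSc w hw) hw.1, ?_⟩
      intro k
      rw [hL, List.countP_map]
      split_ifs with hk
      · rw [← hw.2]
        apply List.countP_congr
        intro x hx
        simp only [Function.comp, decide_eq_true_eq, φ2]
        constructor
        · rintro rfl
          rw [Nat.nth_count (hSc w hw x hx)]
        · intro h
          rw [h, Nat.count_nth_of_lt_card_finite hf hk]
      · rw [List.countP_eq_zero]
        intro x hx
        simp only [Function.comp, decide_eq_true_eq, φ2]
        have := hcl _ (hSc w hw x hx)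
        omega
    · intro w hw
      refine ⟨valid_map ψ (fun x => x / 2 < l) ψmono ψm ss [] w (by simp) (hSL w hw) hw.1, ?_⟩
      intro k
      rw [List.countP_map]
      by_cases hk : P k
      · have h1 : c k = nth L (Nat.count P k) := by
          rw [hL, if_pos (hcl k hk), Nat.nth_count hk]
        rw [h1, ← hw.2]
        apply List.countP_congr
        intro x hx
        simp only [Function.comp, decide_eq_true_eq, ψ2]
        constructor
        · rintro rfl
          rw [Nat.count_nth_of_lt_card_finite hf (hSL w hw x hx)]
        · intro h
          rw [h, Nat.nth_count hk]
      · have h1 : c k = 0 := by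
          by_contra h
          exact hk h
        rw [h1, List.countP_eq_zero]
        intro x hx
        simp only [Function.comp, decide_eq_true_eq, ψ2]
        rintro rfl
        exact hk (hmem _ (hSL w hw x hx))
  exact hbij.ncard_eq

theorem length_of_content (w L : List ℕ)
    (h : ∀ k, w.countP (fun x => x / 2 = k) = nth L k) : w.length = L.sum := by
  induction w generalizing L with
  | nil =>
    have h0 : ∀ a ∈ L, a = 0 := by
      intro a ha
      obtain ⟨i, hi⟩ := List.mem_iff_getElem?.1 ha
      have := h i
      rw [nth_eq] at this
      simp [hi] at this
      omega
    simp [List.sum_eq_zero h0]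
  | cons x w ih =>
    have h0 : nth L (x / 2) ≠ 0 := by
      rw [← h]
      simp
    have := ih (dec L (x / 2)) (by
      intro k
      have := h k
      rw [List.countP_cons] at this
      rw [nth_dec]
      by_cases hk : x / 2 = k
      · subst hk
        simp at this ⊢
        omega
      · simpa [hk] using this)
    have := sum_dec L _ h0
    simp
    omega

theorem length_of_valid : ∀ (ss : List Cst) (p w : List ℕ), valid ss p w → w.length = ss.length
  | [], _, [], _ => rfl
  | [], _, _ :: _, h => by simp [valid] at h
  | _ :: _, _, [], h => by simp [valid] at h
  | s :: ss, p, x :: w, h => by simp [length_of_valid ss (x :: p) w h.2]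

theorem ncard_WS (ss : List Cst) (L : List ℕ) (h : L.sum = ss.length) :
    (WS ss (nth L)).ncard = cnt (List.range L.length) ss [] L := by
  have : WS ss (nth L) = ((gen (List.range L.length) ss [] L).toFinset : Set (List ℕ)) := by
    ext w
    simp only [WS, Set.mem_ofPred_eq, List.coe_toFinset]
    exact (mem_gen _ ss [] L w rfl h).symm
  rw [this, Set.ncard_coe_finset, List.toFinset_card_of_nodup (nodup_gen _ List.nodup_range _ _ _),
    cnt_eq]

theorem WS_empty (ss : List Cst) (L : List ℕ) (h : L.sum ≠ ss.length) :
    (WS ss (nth L)).ncard = 0 := by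
  have : WS ss (nth L) = ∅ := by
    ext w
    simp only [Set.mem_empty_iff_false, iff_false]
    rintro ⟨h1, h2⟩
    exact h ((length_of_content w L h2).symm.trans (length_of_valid _ _ _ h1))
  simp [this]

theorem words_identity (c : ℕ → ℕ) (hf : (Set.ofPred fun k => c k ≠ 0).Finite) :
    (WS specZ c).ncard = (WS spec43 c).ncard + (WS spec421 c).ncard := by
  obtain ⟨L, hpos, hL⟩ := pack c hf
  rw [hL, hL, hL]
  by_cases hs : L.sum = 7
  · rw [ncard_WS _ _ hs, ncard_WS _ _ hs, ncard_WS _ _ hs]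
    have hg := List.all_eq_true.1 comps_good L (mem_comps 8 7 L (by norm_num) hpos hs)
    have hlen : L.length ≤ 7 := by
      rw [← hs]
      exact List.length_le_sum_of_one_le L hpos
    have hr : List.take L.length [0,1,2,3,4,5,6] = List.range L.length := by
      generalize L.length = n at hlen
      interval_cases n <;> decide
    unfold good at hg
    rw [hr] at hg
    exact Nat.eq_of_beq_eq_true hg
  · rw [WS_empty _ _ hs, WS_empty _ _ hs, WS_empty _ _ hs]

theorem card_filter_cells (cs : List (ℕ × ℕ)) (h : cs.Nodup) (q : ℕ × ℕ → Prop)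
    [DecidablePred q] : (cs.toFinset.filter q).card = cs.countP (fun c => q c) := by
  have : cs.toFinset.filter q = (cs.filter (fun c => q c)).toFinset := by
    ext c
    simp
  rw [this, List.toFinset_card_of_nodup (h.filter _), List.countP_eq_length_filter]

/-! ### The ribbon -/

def csZ : List (ℕ × ℕ) := [(0, 3), (0, 2), (1, 2), (1, 1), (2, 1), (2, 0), (3, 0)]

theorem cellsZ : skewCells [4, 3, 2, 1] [2, 1] = csZ.toFinset := by decide

theorem validZ (w : List ℕ) : valid specZ [] w ↔ ∃ a b c d e f g, w = [a, b, c, d, e, f, g] ∧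
    (a % 2 = 1 ∧ b % 2 = 1 ∧ c % 2 = 1 ∧ d % 2 = 1 ∧ e % 2 = 1 ∧ f % 2 = 1 ∧ g % 2 = 1) ∧
    b ≤ a ∧ b < c ∧ d ≤ c ∧ d < e ∧ f ≤ e ∧ f < g := by
  constructor
  · intro h
    have hl := length_of_valid _ _ _ h
    match w, hl with
    | [a, b, c, d, e, f, g], _ =>
      refine ⟨a, b, c, d, e, f, g, rfl, ?_⟩
      simp [valid, specZ, Cst.OK] at h
      omega
  · rintro ⟨a, b, c, d, e, f, g, rfl, h⟩
    simp [valid, specZ, Cst.OK]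
    omega

def entZ (a b c d e f g : ℕ) : ℕ × ℕ → ℕ
  | (0, 3) => a | (0, 2) => b | (1, 2) => c | (1, 1) => d | (2, 1) => e | (2, 0) => f
  | (3, 0) => g | _ => 0

theorem card_skew (m : ℕ → ℕ) (h0 : m 0 = 0) :
    Nat.card {T : SkewSSYT [4, 3, 2, 1] [2, 1] //
      ∀ k, ((skewCells [4, 3, 2, 1] [2, 1]).filter (fun c => T.entry c = k)).card = m k} =
    (WS specZ (fun k => m (k + 1))).ncard := by
  rw [← Nat.card_coe_set_eq]
  have hnd : csZ.Nodup := by decide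
  have hpos : ∀ T : SkewSSYT [4, 3, 2, 1] [2, 1], ∀ c ∈ csZ, 1 ≤ T.entry c := fun T c hc =>
    T.pos c (by rw [cellsZ]; simpa using hc)
  refine Nat.card_eq_of_bijective
    (fun T => ⟨csZ.map (fun c => 2 * T.1.entry c - 1), ?_, ?_⟩) ⟨?_, ?_⟩
  · obtain ⟨T, hT⟩ := T
    rw [validZ]
    refine ⟨_, _, _, _, _, _, _, rfl, ?_⟩
    have p1 := hpos T (0, 3) (by decide)
    have p2 := hpos T (0, 2) (by decide)
    have p3 := hpos T (1, 2) (by decide)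
    have p4 := hpos T (1, 1) (by decide)
    have p5 := hpos T (2, 1) (by decide)
    have p6 := hpos T (2, 0) (by decide)
    have p7 := hpos T (3, 0) (by decide)
    have r1 := T.rowWeak 0 2 (by decide) (by decide)
    have r2 := T.rowWeak 1 1 (by decide) (by decide)
    have r3 := T.rowWeak 2 0 (by decide) (by decide)
    have c1 := T.colStrict 0 2 (by decide) (by decide)
    have c2 := T.colStrict 1 1 (by decide) (by decide)
    have c3 := T.colStrict 2 0 (by decide) (by decide)
    norm_num at r1 r2 r3 c1 c2 c3
    dsimp only
    omega
  · obtain ⟨T, hT⟩ := T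
    intro k
    have h := hT (k + 1)
    rw [cellsZ, card_filter_cells _ hnd] at h
    change _ = m (k + 1)
    rw [← h, List.countP_map]
    apply List.countP_congr
    intro c hc
    have := hpos T c hc
    simp only [Function.comp, decide_eq_true_eq]
    omega
  · rintro ⟨T, hT⟩ ⟨T', hT'⟩ h
    have h1 := congrArg Subtype.val h
    simp only [List.map_inj_left] at h1
    have h2 : T.entry = T'.entry := by
      funext c
      by_cases hc : c ∈ csZ
      · have := h1 c hc
        have := hpos T c hc
        have := hpos T' c hc
        omega
      · rw [T.outside c (by rw [cellsZ]; simpa using hc),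
          T'.outside c (by rw [cellsZ]; simpa using hc)]
    cases T
    cases T'
    simp only at h2
    subst h2
    rfl
  · rintro ⟨w, hw1, hw2⟩
    obtain ⟨a, b, c, d, e, f, g, rfl, ⟨ha, hb, hc, hd, he, hf, hg⟩, h1, h2, h3, h4, h5, h6⟩ :=
      (validZ w).1 hw1
    have hmem : ∀ i j, (i, j) ∈ skewCells [4, 3, 2, 1] [2, 1] → (i, j) ∈ csZ := by
      intro i j h
      rw [cellsZ] at h
      simpa using h
    let T : SkewSSYT [4, 3, 2, 1] [2, 1] :=
      { entry := entZ ((a + 1) / 2) ((b + 1) / 2) ((c + 1) / 2) ((d + 1) / 2) ((e + 1) / 2)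
          ((f + 1) / 2) ((g + 1) / 2)
        outside := by
          intro x hx
          rw [cellsZ] at hx
          unfold entZ
          split <;> first | rfl | exact absurd (by decide) hx
        pos := by
          rintro ⟨i, j⟩ hx
          have := hmem i j hx
          simp only [csZ, List.mem_cons, Prod.mk.injEq, List.not_mem_nil, or_false] at this
          rcases this with ⟨rfl, rfl⟩ | ⟨rfl, rfl⟩ | ⟨rfl, rfl⟩ | ⟨rfl, rfl⟩ | ⟨rfl, rfl⟩ |
            ⟨rfl, rfl⟩ | ⟨rfl, rfl⟩ <;> simp only [entZ] <;> omega
        rowWeak := by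
          intro i j hx hy
          have := hmem i j hx
          have hy := hmem _ _ hy
          simp only [csZ, List.mem_cons, Prod.mk.injEq, List.not_mem_nil, or_false] at this
          rcases this with ⟨rfl, rfl⟩ | ⟨rfl, rfl⟩ | ⟨rfl, rfl⟩ | ⟨rfl, rfl⟩ | ⟨rfl, rfl⟩ |
            ⟨rfl, rfl⟩ | ⟨rfl, rfl⟩ <;> first
            | exact absurd hy (by decide)
            | (simp only [entZ]; omega)
        colStrict := by
          intro i j hx hy
          have := hmem i j hx
          have hy := hmem _ _ hy
          simp only [csZ, List.mem_cons, Prod.mk.injEq, List.not_mem_nil, or_false] at this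
          rcases this with ⟨rfl, rfl⟩ | ⟨rfl, rfl⟩ | ⟨rfl, rfl⟩ | ⟨rfl, rfl⟩ | ⟨rfl, rfl⟩ |
            ⟨rfl, rfl⟩ | ⟨rfl, rfl⟩ <;> first
            | exact absurd hy (by decide)
            | (simp only [entZ]; omega) }
    have hw : csZ.map (fun c => 2 * T.entry c - 1) = [a, b, c, d, e, f, g] := by
      simp only [T, csZ, List.map, entZ, List.cons.injEq, and_true]
      omega
    refine ⟨⟨T, ?_⟩, Subtype.ext hw⟩
    intro k
    rw [cellsZ, card_filter_cells _ hnd]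
    cases k with
    | zero =>
      rw [h0, List.countP_eq_zero]
      intro c hc
      have := hpos T c hc
      simp
      omega
    | succ k =>
      refine Eq.trans ?_ (hw2 k)
      rw [← hw, List.countP_map]
      apply List.countP_congr
      intro c hc
      have := hpos T c hc
      simp only [Function.comp, decide_eq_true_eq]
      omega

/-! ### Shifted shapes -/

/-- Common part of the treatment of the two shifted shapes. -/
theorem card_shifted (lam : List ℕ) (cs : List (ℕ × ℕ)) (ss : List Cst) (hnd : cs.Nodup)
    (hcells : shiftedCells lam = cs.toFinset)
    (hval : ∀ S : ShiftedSSYT lam, valid ss [] (cs.map (fun c => S.entry c - 1)))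
    (hsurj : ∀ w, valid ss [] w → ∃ S : ShiftedSSYT lam, cs.map (fun c => S.entry c - 1) = w)
    (m : ℕ → ℕ) (h0 : m 0 = 0) :
    Nat.card {S : ShiftedSSYT lam //
      ∀ k, ((shiftedCells lam).filter (fun c => (S.entry c + 1) / 2 = k)).card = m k} =
    (WS ss (fun k => m (k + 1))).ncard := by
  rw [← Nat.card_coe_set_eq]
  have hpos : ∀ T : ShiftedSSYT lam, ∀ c ∈ cs, 1 ≤ T.entry c := fun T c hc =>
    T.pos c (by rw [hcells]; simpa using hc)
  refine Nat.card_eq_of_bijective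
    (fun T => ⟨cs.map (fun c => T.1.entry c - 1), hval T.1, ?_⟩) ⟨?_, ?_⟩
  · obtain ⟨T, hT⟩ := T
    intro k
    have h := hT (k + 1)
    rw [hcells, card_filter_cells _ hnd] at h
    change _ = m (k + 1)
    rw [← h, List.countP_map]
    apply List.countP_congr
    intro c hc
    have := hpos T c hc
    simp only [Function.comp, decide_eq_true_eq]
    omega
  · rintro ⟨T, hT⟩ ⟨T', hT'⟩ h
    have h1 := congrArg Subtype.val h
    simp only [List.map_inj_left] at h1
    have h2 : T.entry = T'.entry := by
      funext c
      by_cases hc : c ∈ cs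
      · have := h1 c hc
        have := hpos T c hc
        have := hpos T' c hc
        omega
      · rw [T.outside c (by rw [hcells]; simpa using hc),
          T'.outside c (by rw [hcells]; simpa using hc)]
    cases T
    cases T'
    simp only at h2
    subst h2
    rfl
  · rintro ⟨w, hw1, hw2⟩
    obtain ⟨T, hw⟩ := hsurj w hw1
    refine ⟨⟨T, ?_⟩, Subtype.ext hw⟩
    intro k
    rw [hcells, card_filter_cells _ hnd]
    cases k with
    | zero =>
      rw [h0, List.countP_eq_zero]
      intro c hc
      have := hpos T c hc
      simp
      omega
    | succ k =>
      refine Eq.trans ?_ (hw2 k)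
      rw [← hw, List.countP_map]
      apply List.countP_congr
      intro c hc
      have := hpos T c hc
      simp only [Function.comp, decide_eq_true_eq]
      omega

def cs43 : List (ℕ × ℕ) := [(0, 0), (0, 1), (1, 1), (0, 2), (1, 2), (0, 3), (1, 3)]

theorem cells43 : shiftedCells [4, 3] = cs43.toFinset := by decide

def ent43 (a b c d e f g : ℕ) : ℕ × ℕ → ℕ
  | (0, 0) => a | (0, 1) => b | (1, 1) => c | (0, 2) => d | (1, 2) => e | (0, 3) => f
  | (1, 3) => g | _ => 0

theorem valid43 (a b c d e f g : ℕ) : valid spec43 [] [a, b, c, d, e, f, g] ↔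
    (a % 2 = 1 ∧ c % 2 = 1) ∧
    (a < b ∨ a = b ∧ b % 2 = 1) ∧ (b < c ∨ b = c ∧ c % 2 = 0) ∧ (b < d ∨ b = d ∧ d % 2 = 1) ∧
    (c < e ∨ c = e ∧ e % 2 = 1) ∧ (d < e ∨ d = e ∧ e % 2 = 0) ∧ (d < f ∨ d = f ∧ f % 2 = 1) ∧
    (e < g ∨ e = g ∧ g % 2 = 1) ∧ (f < g ∨ f = g ∧ g % 2 = 0) := by
  simp [valid, spec43, Cst.OK]
  omega

theorem card43 (m : ℕ → ℕ) (h0 : m 0 = 0) :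
    Nat.card {S : ShiftedSSYT [4, 3] //
      ∀ k, ((shiftedCells [4, 3]).filter (fun c => (S.entry c + 1) / 2 = k)).card = m k} =
    (WS spec43 (fun k => m (k + 1))).ncard := by
  refine card_shifted [4, 3] cs43 spec43 (by decide) cells43 ?_ ?_ m h0
  · intro S
    have e : cs43.map (fun c => S.entry c - 1) = [S.entry (0, 0) - 1, S.entry (0, 1) - 1,
      S.entry (1, 1) - 1, S.entry (0, 2) - 1, S.entry (1, 2) - 1, S.entry (0, 3) - 1,
      S.entry (1, 3) - 1] := rfl
    rw [e, valid43]
    have p1 := S.pos (0, 0) (by decide)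
    have p2 := S.pos (0, 1) (by decide)
    have p3 := S.pos (1, 1) (by decide)
    have p4 := S.pos (0, 2) (by decide)
    have p5 := S.pos (1, 2) (by decide)
    have p6 := S.pos (0, 3) (by decide)
    have p7 := S.pos (1, 3) (by decide)
    have r1 := S.rowWeak 0 0 (by decide) (by decide)
    have r2 := S.rowWeak 0 1 (by decide) (by decide)
    have r3 := S.rowWeak 0 2 (by decide) (by decide)
    have r4 := S.rowWeak 1 1 (by decide) (by decide)
    have r5 := S.rowWeak 1 2 (by decide) (by decide)
    have c1 := S.colWeak 0 1 (by decide) (by decide)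
    have c2 := S.colWeak 0 2 (by decide) (by decide)
    have c3 := S.colWeak 0 3 (by decide) (by decide)
    have r1' := S.rowPrime 0 0 (by decide) (by decide)
    have r2' := S.rowPrime 0 1 (by decide) (by decide)
    have r3' := S.rowPrime 0 2 (by decide) (by decide)
    have r4' := S.rowPrime 1 1 (by decide) (by decide)
    have r5' := S.rowPrime 1 2 (by decide) (by decide)
    have c1' := S.colPrime 0 1 (by decide) (by decide)
    have c2' := S.colPrime 0 2 (by decide) (by decide)
    have c3' := S.colPrime 0 3 (by decide) (by decide)
    have d1 := S.diag 0 (by decide)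
    have d2 := S.diag 1 (by decide)
    norm_num [Nat.even_iff, Nat.odd_iff] at r1 r2 r3 r4 r5 c1 c2 c3 r1' r2' r3' r4' r5' c1' c2' c3' d1 d2
    refine ⟨⟨?_, ?_⟩, ?_, ?_, ?_, ?_, ?_, ?_, ?_, ?_⟩ <;> omega
  · intro w hw
    have hl := length_of_valid _ _ _ hw
    match w, hl with
    | [a, b, c, d, e, f, g], _ =>
    rw [valid43] at hw
    obtain ⟨⟨d1, d2⟩, h1, h2, h3, h4, h5, h6, h7, h8⟩ := hw
    have hmem : ∀ i j, (i, j) ∈ shiftedCells [4, 3] → (i, j) ∈ cs43 := by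
      intro i j h
      rw [cells43] at h
      simpa using h
    refine ⟨{ entry := ent43 (a + 1) (b + 1) (c + 1) (d + 1) (e + 1) (f + 1) (g + 1),
              outside := ?_, pos := ?_, rowWeak := ?_, rowPrime := ?_, colWeak := ?_,
              colPrime := ?_, diag := ?_ }, rfl⟩
    · intro x hx
      rw [cells43] at hx
      unfold ent43
      split <;> first | rfl | exact absurd (by decide) hx
    · rintro ⟨i, j⟩ hx
      have := hmem i j hx
      simp only [cs43, List.mem_cons, Prod.mk.injEq, List.not_mem_nil, or_false] at this
      rcases this with ⟨rfl, rfl⟩ | ⟨rfl, rfl⟩ | ⟨rfl, rfl⟩ | ⟨rfl, rfl⟩ | ⟨rfl, rfl⟩ |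
        ⟨rfl, rfl⟩ | ⟨rfl, rfl⟩ <;> simp only [ent43] <;> omega
    iterate 4
      · intro i j hx hy
        have := hmem i j hx
        have hy := hmem _ _ hy
        simp only [cs43, List.mem_cons, Prod.mk.injEq, List.not_mem_nil, or_false] at this
        rcases this with ⟨rfl, rfl⟩ | ⟨rfl, rfl⟩ | ⟨rfl, rfl⟩ | ⟨rfl, rfl⟩ | ⟨rfl, rfl⟩ |
          ⟨rfl, rfl⟩ | ⟨rfl, rfl⟩ <;> first
          | exact absurd hy (by decide)
          | (simp only [ent43, Nat.even_iff, Nat.odd_iff]; omega)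
    · intro i hx
      have := hmem i i hx
      simp only [cs43, List.mem_cons, Prod.mk.injEq, List.not_mem_nil, or_false] at this
      have hi : i = 0 ∨ i = 1 := by omega
      rcases hi with rfl | rfl <;> simp only [ent43, Nat.even_iff] <;> omega

def cs421 : List (ℕ × ℕ) := [(0, 0), (0, 1), (1, 1), (0, 2), (1, 2), (2, 2), (0, 3)]

theorem cells421 : shiftedCells [4, 2, 1] = cs421.toFinset := by decide

def ent421 (a b c d e f g : ℕ) : ℕ × ℕ → ℕ
  | (0, 0) => a | (0, 1) => b | (1, 1) => c | (0, 2) => d | (1, 2) => e | (2, 2) => f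
  | (0, 3) => g | _ => 0

theorem valid421 (a b c d e f g : ℕ) : valid spec421 [] [a, b, c, d, e, f, g] ↔
    (a % 2 = 1 ∧ c % 2 = 1 ∧ f % 2 = 1) ∧
    (a < b ∨ a = b ∧ b % 2 = 1) ∧ (b < c ∨ b = c ∧ c % 2 = 0) ∧ (b < d ∨ b = d ∧ d % 2 = 1) ∧
    (c < e ∨ c = e ∧ e % 2 = 1) ∧ (d < e ∨ d = e ∧ e % 2 = 0) ∧ (e < f ∨ e = f ∧ f % 2 = 0) ∧
    (d < g ∨ d = g ∧ g % 2 = 1) := by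
  simp [valid, spec421, Cst.OK]
  omega

theorem card421 (m : ℕ → ℕ) (h0 : m 0 = 0) :
    Nat.card {S : ShiftedSSYT [4, 2, 1] //
      ∀ k, ((shiftedCells [4, 2, 1]).filter (fun c => (S.entry c + 1) / 2 = k)).card = m k} =
    (WS spec421 (fun k => m (k + 1))).ncard := by
  refine card_shifted [4, 2, 1] cs421 spec421 (by decide) cells421 ?_ ?_ m h0
  · intro S
    have e : cs421.map (fun c => S.entry c - 1) = [S.entry (0, 0) - 1, S.entry (0, 1) - 1,
      S.entry (1, 1) - 1, S.entry (0, 2) - 1, S.entry (1, 2) - 1, S.entry (2, 2) - 1,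
      S.entry (0, 3) - 1] := rfl
    rw [e, valid421]
    have p1 := S.pos (0, 0) (by decide)
    have p2 := S.pos (0, 1) (by decide)
    have p3 := S.pos (1, 1) (by decide)
    have p4 := S.pos (0, 2) (by decide)
    have p5 := S.pos (1, 2) (by decide)
    have p6 := S.pos (0, 3) (by decide)
    have p7 := S.pos (2, 2) (by decide)
    have r1 := S.rowWeak 0 0 (by decide) (by decide)
    have r2 := S.rowWeak 0 1 (by decide) (by decide)
    have r3 := S.rowWeak 0 2 (by decide) (by decide)
    have r4 := S.rowWeak 1 1 (by decide) (by decide)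
    have c1 := S.colWeak 0 1 (by decide) (by decide)
    have c2 := S.colWeak 0 2 (by decide) (by decide)
    have c3 := S.colWeak 1 2 (by decide) (by decide)
    have r1' := S.rowPrime 0 0 (by decide) (by decide)
    have r2' := S.rowPrime 0 1 (by decide) (by decide)
    have r3' := S.rowPrime 0 2 (by decide) (by decide)
    have r4' := S.rowPrime 1 1 (by decide) (by decide)
    have c1' := S.colPrime 0 1 (by decide) (by decide)
    have c2' := S.colPrime 0 2 (by decide) (by decide)
    have c3' := S.colPrime 1 2 (by decide) (by decide)
    have d1 := S.diag 0 (by decide)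
    have d2 := S.diag 1 (by decide)
    have d3 := S.diag 2 (by decide)
    norm_num [Nat.even_iff, Nat.odd_iff] at r1 r2 r3 r4 c1 c2 c3 r1' r2' r3' r4' c1' c2' c3' d1 d2 d3
    refine ⟨⟨?_, ?_, ?_⟩, ?_, ?_, ?_, ?_, ?_, ?_, ?_⟩ <;> omega
  · intro w hw
    have hl := length_of_valid _ _ _ hw
    match w, hl with
    | [a, b, c, d, e, f, g], _ =>
    rw [valid421] at hw
    obtain ⟨⟨d1, d2, d3⟩, h1, h2, h3, h4, h5, h6, h7⟩ := hw
    have hmem : ∀ i j, (i, j) ∈ shiftedCells [4, 2, 1] → (i, j) ∈ cs421 := by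
      intro i j h
      rw [cells421] at h
      simpa using h
    refine ⟨{ entry := ent421 (a + 1) (b + 1) (c + 1) (d + 1) (e + 1) (f + 1) (g + 1),
              outside := ?_, pos := ?_, rowWeak := ?_, rowPrime := ?_, colWeak := ?_,
              colPrime := ?_, diag := ?_ }, rfl⟩
    · intro x hx
      rw [cells421] at hx
      unfold ent421
      split <;> first | rfl | exact absurd (by decide) hx
    · rintro ⟨i, j⟩ hx
      have := hmem i j hx
      simp only [cs421, List.mem_cons, Prod.mk.injEq, List.not_mem_nil, or_false] at this
      rcases this with ⟨rfl, rfl⟩ | ⟨rfl, rfl⟩ | ⟨rfl, rfl⟩ | ⟨rfl, rfl⟩ | ⟨rfl, rfl⟩ |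
        ⟨rfl, rfl⟩ | ⟨rfl, rfl⟩ <;> simp only [ent421] <;> omega
    iterate 4
      · intro i j hx hy
        have := hmem i j hx
        have hy := hmem _ _ hy
        simp only [cs421, List.mem_cons, Prod.mk.injEq, List.not_mem_nil, or_false] at this
        rcases this with ⟨rfl, rfl⟩ | ⟨rfl, rfl⟩ | ⟨rfl, rfl⟩ | ⟨rfl, rfl⟩ | ⟨rfl, rfl⟩ |
          ⟨rfl, rfl⟩ | ⟨rfl, rfl⟩ <;> first
          | exact absurd hy (by decide)
          | (simp only [ent421, Nat.even_iff, Nat.odd_iff]; omega)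
    · intro i hx
      have := hmem i i hx
      simp only [cs421, List.mem_cons, Prod.mk.injEq, List.not_mem_nil, or_false] at this
      have hi : i = 0 ∨ i = 1 ∨ i = 2 := by omega
      rcases hi with rfl | rfl | rfl <;> simp only [ent421, Nat.even_iff] <;> omega

theorem card_shifted_zero (lam : List ℕ) (m : ℕ → ℕ) (h0 : m 0 ≠ 0) :
    Nat.card {S : ShiftedSSYT lam //
      ∀ k, ((shiftedCells lam).filter (fun c => (S.entry c + 1) / 2 = k)).card = m k} = 0 := by
  have : IsEmpty {S : ShiftedSSYT lam //
      ∀ k, ((shiftedCells lam).filter (fun c => (S.entry c + 1) / 2 = k)).card = m k} := by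
    refine ⟨fun S => h0 ?_⟩
    rw [← S.2 0, Finset.card_eq_zero, Finset.filter_eq_empty_iff]
    intro c hc
    have := S.1.pos c hc
    omega
  exact Nat.card_of_isEmpty

theorem card_skew_zero (lam mu : List ℕ) (m : ℕ → ℕ) (h0 : m 0 ≠ 0) :
    Nat.card {T : SkewSSYT lam mu //
      ∀ k, ((skewCells lam mu).filter (fun c => T.entry c = k)).card = m k} = 0 := by
  have : IsEmpty {T : SkewSSYT lam mu //
      ∀ k, ((skewCells lam mu).filter (fun c => T.entry c = k)).card = m k} := by
    refine ⟨fun S => h0 ?_⟩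
    rw [← S.2 0, Finset.card_eq_zero, Finset.filter_eq_empty_iff]
    intro c hc
    have := S.1.pos c hc
    omega
  exact Nat.card_of_isEmpty

theorem skewSchur_staircase_4321_21 :
    skewSchur [4, 3, 2, 1] [2, 1] = schurP [4, 3] + schurP [4, 2, 1] := by
  funext m
  change (Nat.card _ : ℚ) = (Nat.card _ : ℚ) + (Nat.card _ : ℚ)
  by_cases h0 : m 0 = 0
  · rw [card_skew _ h0, card43 _ h0, card421 _ h0, words_identity]
    · push_cast
      rfl
    · have := m.hasFiniteSupport
      refine (this.preimage (f := fun k => k + 1) ?_)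
      intro a _ b _ h
      simpa using h
  · rw [card_skew_zero _ _ _ h0, card_shifted_zero _ _ h0, card_shifted_zero _ _ h0]
    simp

end
end

section
/- The skew Schur function s_{δ_5/δ_3} = s_{(5,4,3,2,1)/(3,2,1)} equals P_{(5,4)} + 2·P_{(5,3,1)} + P_{(4,3,2)}. -/
/-!
STATEMENT 13: s_{δ₅/δ₃} = s_{(5,4,3,2,1)/(3,2,1)} = P_{(5,4)} + 2·P_{(5,3,1)} + P_{(4,3,2)}.
-/

noncomputable section

/-- A nine-cell shape: cells are indexed by `0, …, 8`; `rows` and `cols` are the pairs of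
horizontally (vertically) adjacent cells and `diag` the cells where odd letters are forbidden. -/
structure Sys where
  rows : List (ℕ × ℕ)
  cols : List (ℕ × ℕ)
  diag : List ℕ

def Sys.all (S : Sys) : List (ℕ × ℕ) := S.rows ++ S.cols

/-- Removing the cells `s \ t` carrying one letter (subsets are bit masks). -/
def bstep (al str : List (ℕ × ℕ)) (forb : List ℕ) (s t : ℕ) : Bool :=
  Nat.beq (t &&& s) t &&
  (al.all (fun e => !(s.testBit e.1 && !t.testBit e.1 && t.testBit e.2)) &&
  (str.all (fun e => !((s.testBit e.1 && !t.testBit e.1) && (s.testBit e.2 && !t.testBit e.2))) &&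
  forb.all (fun c => !(s.testBit c && !t.testBit c))))

def Sys.step2 (S : Sys) (s u : ℕ) : Bool := bstep S.all S.cols [] s u
def Sys.step1 (S : Sys) (u t : ℕ) : Bool := bstep S.all S.rows S.diag u t

def pop (s : ℕ) : ℕ := ((List.range 9).filter (fun c => s.testBit c)).length

def Sys.ideal (S : Sys) (s : ℕ) : Bool := S.all.all (fun e => !s.testBit e.2 || s.testBit e.1)

def Sys.ideals (S : Sys) : List ℕ := (List.range 512).filter S.ideal

/-- The number of ways to remove the letters `k` and `k'` going from `s` to `t`. -/
def Sys.tr (S : Sys) (ids : List ℕ) (s t : ℕ) : ℕ :=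
  bif Nat.beq (t &&& s) t then (ids.filter (fun u => S.step2 s u && S.step1 u t)).length else 0

def forceNat {β : Type} : ℕ → (ℕ → β) → β
  | 0, k => k 0
  | n + 1, k => k (Nat.succ n)

theorem forceNat_eq {β : Type} (n : ℕ) (k : ℕ → β) : forceNat n k = k n := by
  cases n <;> rfl

def forceList {α β : Type} (frc : α → (α → β) → β) : List α → (List α → β) → β
  | [], k => k []
  | x :: xs, k => frc x fun y => forceList frc xs fun ys => k (y :: ys)

theorem forceList_eq {α β : Type} (frc : α → (α → β) → β) (h : ∀ x k, frc x k = k x)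
    (l : List α) (k : List α → β) : forceList frc l k = k l := by
  induction l generalizing k with
  | nil => rfl
  | cons x xs ih => simp [forceList, h, ih]

def dot : List ℕ → List ℕ → ℕ
  | x :: xs, y :: ys => Nat.add (Nat.mul x y) (dot xs ys)
  | _, _ => 0

def mulVec (M : List (List ℕ)) (v : List ℕ) : List ℕ := M.map (fun r => dot r v)

/-- ideals with `p` cells, for `p = 0, …, 9`. -/
def Sys.levels (ids : List ℕ) : List (List ℕ) :=
  (List.range 10).map (fun p => ids.filter (fun s => Nat.beq (pop s) p))

def Sys.table (S : Sys) (ids : List ℕ) (lv : List (List ℕ)) : List (List (List (List ℕ))) :=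
  (List.range 10).map fun p => (List.range 10).map fun a =>
    (lv.getD (p + a) []).map fun s => (lv.getD p []).map fun t => S.tr ids s t

def forceTable {β : Type} : List (List (List (List ℕ))) →
    (List (List (List (List ℕ))) → β) → β :=
  forceList (forceList (forceList (forceList forceNat)))

def Sys.withTable {β : Type} (S : Sys) (k : List (List (List (List ℕ))) → β) : β :=
  forceList forceNat S.ideals fun ids =>
  forceList (forceList forceNat) (Sys.levels ids) fun lv =>
  forceTable (S.table ids lv) k

/-- Checks the identity for all compositions of `9`. -/
def chk (T0 T1 T2 T3 : List (List (List (List ℕ)))) :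
    ℕ → ℕ → List ℕ → List ℕ → List ℕ → List ℕ → Bool
  | 0, _, _, _, _, _ => true
  | n + 1, p, v0, v1, v2, v3 =>
    if p = 9 then
      Nat.beq (v0.headD 0) (v1.headD 0 + 2 * v2.headD 0 + v3.headD 0)
    else (List.range 9).all fun b =>
      Nat.ble 10 (p + (b + 1)) ||
      forceList forceNat (mulVec ((T0.getD p []).getD (b + 1) []) v0) fun w0 =>
      forceList forceNat (mulVec ((T1.getD p []).getD (b + 1) []) v1) fun w1 =>
      forceList forceNat (mulVec ((T2.getD p []).getD (b + 1) []) v2) fun w2 =>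
      forceList forceNat (mulVec ((T3.getD p []).getD (b + 1) []) v3) fun w3 =>
      forceNat (p + (b + 1)) fun q => chk T0 T1 T2 T3 n q w0 w1 w2 w3

def S0 : Sys := ⟨[(0, 1), (2, 3), (4, 5), (6, 7)], [(0, 3), (2, 5), (4, 7), (6, 8)],
  [0, 1, 2, 3, 4, 5, 6, 7, 8]⟩
def S1 : Sys := ⟨[(0, 1), (1, 2), (2, 3), (3, 4), (5, 6), (6, 7), (7, 8)],
  [(1, 5), (2, 6), (3, 7), (4, 8)], [0, 5]⟩
def S2 : Sys := ⟨[(0, 1), (1, 2), (2, 3), (3, 4), (5, 6), (6, 7)],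
  [(1, 5), (2, 6), (3, 7), (6, 8)], [0, 5, 8]⟩
def S3 : Sys := ⟨[(0, 1), (1, 2), (2, 3), (4, 5), (5, 6), (7, 8)],
  [(1, 4), (2, 5), (3, 6), (5, 7), (6, 8)], [0, 4, 7]⟩

def bigCheck : Bool :=
  S0.withTable fun T0 => S1.withTable fun T1 => S2.withTable fun T2 => S3.withTable fun T3 =>
  chk T0 T1 T2 T3 10 0 [1] [1] [1] [1]

theorem bigCheck_true : bigCheck = true := by decide +kernel

/-! ### Specification of the transfer steps -/

theorem land_beq_iff (s t : ℕ) :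
    Nat.beq (t &&& s) t = true ↔ ∀ c, t.testBit c = true → s.testBit c = true := by
  rw [Nat.beq_eq]
  constructor
  · intro h c hc
    have := congrArg (fun x => x.testBit c) h
    simp only [Nat.testBit_land, hc, Bool.true_and] at this
    exact this
  · intro h
    apply Nat.eq_of_testBit_eq
    intro c
    rw [Nat.testBit_land]
    cases hc : t.testBit c
    · rfl
    · simp [h c hc]

theorem bstep_iff (al str : List (ℕ × ℕ)) (forb : List ℕ) (s t : ℕ) :
    bstep al str forb s t = true ↔
      (∀ c, t.testBit c = true → s.testBit c = true) ∧
      (∀ e ∈ al, ¬ (s.testBit e.1 = true ∧ t.testBit e.1 = false ∧ t.testBit e.2 = true)) ∧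
      (∀ e ∈ str, ¬ (s.testBit e.1 = true ∧ t.testBit e.1 = false ∧
        s.testBit e.2 = true ∧ t.testBit e.2 = false)) ∧
      (∀ c ∈ forb, ¬ (s.testBit c = true ∧ t.testBit c = false)) := by
  unfold bstep
  simp only [Bool.and_eq_true, land_beq_iff, List.all_eq_true]
  refine and_congr Iff.rfl (and_congr ?_ (and_congr ?_ ?_))
  · refine forall₂_congr fun e _ => ?_
    cases s.testBit e.1 <;> cases t.testBit e.1 <;> cases t.testBit e.2 <;> simp
  · refine forall₂_congr fun e _ => ?_
    cases s.testBit e.1 <;> cases t.testBit e.1 <;> cases t.testBit e.2 <;>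
      cases s.testBit e.2 <;> simp
  · refine forall₂_congr fun e _ => ?_
    cases s.testBit e <;> cases t.testBit e <;> simp

theorem ideal_iff (S : Sys) (s : ℕ) : S.ideal s = true ↔
    ∀ e ∈ S.all, s.testBit e.2 = true → s.testBit e.1 = true := by
  unfold Sys.ideal
  simp only [List.all_eq_true]
  refine forall₂_congr fun e _ => ?_
  cases s.testBit e.1 <;> cases s.testBit e.2 <;> simp

theorem ideal_of_bstep (S : Sys) (str : List (ℕ × ℕ)) (forb : List ℕ) (s t : ℕ)
    (hs : S.ideal s = true) (h : bstep S.all str forb s t = true) : S.ideal t = true := by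
  rw [ideal_iff] at *
  rw [bstep_iff] at h
  intro e he h2
  have h1 := hs e he (h.1 _ h2)
  by_contra hc
  exact h.2.1 e he ⟨h1, by simpa using hc, h2⟩

theorem mask_ext {s t : ℕ} (hs : s < 512) (ht : t < 512)
    (h : ∀ c < 9, s.testBit c = t.testBit c) : s = t := by
  apply Nat.eq_of_testBit_eq
  intro c
  by_cases hc : c < 9
  · exact h c hc
  · have h9 : 2 ^ 9 ≤ 2 ^ c := Nat.pow_le_pow_right (by norm_num) (by omega)
    rw [Nat.testBit_lt_two_pow (by omega), Nat.testBit_lt_two_pow (by omega)]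

theorem lt9_of_testBit {s c : ℕ} (hs : s < 512) (h : s.testBit c = true) : c < 9 := by
  by_contra hc
  have h9 : 2 ^ 9 ≤ 2 ^ c := Nat.pow_le_pow_right (by norm_num) (by omega)
  rw [Nat.testBit_lt_two_pow (by omega)] at h
  exact absurd h (by simp)

/-- The bit mask of a set of cells. -/
def mkMask (p : ℕ → Bool) : ℕ := Nat.ofBits (n := 9) (fun i => p i)

theorem mkMask_lt (p : ℕ → Bool) : mkMask p < 512 := Nat.ofBits_lt_two_pow _

theorem testBit_mkMask (p : ℕ → Bool) (hp : ∀ c, p c = true → c < 9) (c : ℕ) :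
    (mkMask p).testBit c = p c := by
  unfold mkMask
  rw [Nat.testBit_ofBits]
  split
  · rfl
  · rename_i h
    cases hc : p c
    · rfl
    · exact absurd (hp c hc) h

theorem pop_eq (s : ℕ) : pop s = ((Finset.range 9).filter (fun c => s.testBit c = true)).card := by
  unfold pop
  rw [← List.toFinset_card_of_nodup (List.nodup_range.filter _)]
  congr 1
  ext c
  simp

/-! ### The counting recursion -/

/-- Number of pairs of removal steps, theoretical version. -/
def Sys.T (S : Sys) (s t : ℕ) : ℕ :=
  ((Finset.range 512).filter (fun u => S.step2 s u = true ∧ S.step1 u t = true)).card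

def Sys.W (S : Sys) : List ℕ → ℕ → ℕ
  | [], s => if s = 0 then 1 else 0
  | a :: l, s => ∑ t ∈ Finset.range 512, if pop s = pop t + a then S.T s t * S.W l t else 0

theorem T_sub {S : Sys} {s t : ℕ} (h : S.T s t ≠ 0) :
    ∀ c, t.testBit c = true → s.testBit c = true := by
  unfold Sys.T at h
  rw [Finset.card_ne_zero] at h
  obtain ⟨u, hu⟩ := h
  rw [Finset.mem_filter] at hu
  simp only [Sys.step1, Sys.step2, bstep_iff] at hu
  intro c hc
  exact hu.2.1.1 c (hu.2.2.1 c hc)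

theorem T_ideal {S : Sys} {s t : ℕ} (hs : S.ideal s = true) (h : S.T s t ≠ 0) :
    S.ideal t = true := by
  unfold Sys.T at h
  rw [Finset.card_ne_zero] at h
  obtain ⟨u, hu⟩ := h
  rw [Finset.mem_filter] at hu
  simp only [Sys.step1, Sys.step2] at hu
  exact ideal_of_bstep _ _ _ _ _ (ideal_of_bstep _ _ _ _ _ hs hu.2.1) hu.2.2

theorem eq_of_sub_pop {s t : ℕ} (hs : s < 512) (ht : t < 512)
    (h : ∀ c, t.testBit c = true → s.testBit c = true) (hp : pop s ≤ pop t) : s = t := by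
  rw [pop_eq, pop_eq] at hp
  have := Finset.eq_of_subset_of_card_le (s := (Finset.range 9).filter (fun c => t.testBit c = true))
    (t := (Finset.range 9).filter (fun c => s.testBit c = true)) (by
      intro c hc
      simp only [Finset.mem_filter] at hc ⊢
      exact ⟨hc.1, h c hc.2⟩) hp
  apply mask_ext hs ht
  intro c hc
  have h2 := Finset.ext_iff.mp this c
  simp only [Finset.mem_filter, Finset.mem_range, hc, true_and] at h2
  rw [Bool.eq_iff_iff]
  exact h2.symm

theorem bstep_self (al str : List (ℕ × ℕ)) (forb : List ℕ) (s : ℕ) :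
    bstep al str forb s s = true := by
  rw [bstep_iff]
  refine ⟨fun _ h => h, ?_, ?_, ?_⟩
  · rintro e - ⟨h1, h2, -⟩
    exact absurd (h1.symm.trans h2) (by simp)
  · rintro e - ⟨h1, h2, -⟩
    exact absurd (h1.symm.trans h2) (by simp)
  · rintro e - ⟨h1, h2⟩
    exact absurd (h1.symm.trans h2) (by simp)

theorem T_self (S : Sys) {s : ℕ} (hs : s < 512) : S.T s s = 1 := by
  unfold Sys.T
  rw [Finset.card_eq_one]
  refine ⟨s, ?_⟩
  ext u
  simp only [Finset.mem_filter, Finset.mem_range, Finset.mem_singleton]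
  constructor
  · rintro ⟨hu, h2, h1⟩
    simp only [Sys.step1, Sys.step2, bstep_iff] at h1 h2
    apply mask_ext hu hs
    intro c _
    rw [Bool.eq_iff_iff]
    exact ⟨h2.1 c, h1.1 c⟩
  · rintro rfl
    exact ⟨hs, bstep_self _ _ _ _, bstep_self _ _ _ _⟩

theorem W_zero_cons (S : Sys) (l : List ℕ) {s : ℕ} (hs : s < 512) :
    S.W (0 :: l) s = S.W l s := by
  rw [Sys.W, Finset.sum_eq_single s]
  · simp [T_self S hs]
  · intro t ht hne
    rw [Finset.mem_range] at ht
    split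
    · rename_i hp
      by_cases hT : S.T s t = 0
      · simp [hT]
      · exact absurd (eq_of_sub_pop hs ht (T_sub hT) (by omega)).symm hne
    · rfl
  · intro h
    exact absurd (Finset.mem_range.mpr hs) h

theorem W_filter (S : Sys) (l : List ℕ) {s : ℕ} (hs : s < 512) :
    S.W (l.filter (fun a => a ≠ 0)) s = S.W l s := by
  induction l generalizing s with
  | nil => rfl
  | cons a l ih =>
    by_cases ha : a = 0
    · subst ha
      rw [W_zero_cons S l hs, ← ih hs]
      simp
    · rw [List.filter_cons_of_pos (by simpa using ha), Sys.W, Sys.W]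
      apply Finset.sum_congr rfl
      intro t ht
      rw [ih (Finset.mem_range.mp ht)]

theorem W_sum {S : Sys} {l : List ℕ} {s : ℕ} (h : S.W l s ≠ 0) : pop s = l.sum := by
  induction l generalizing s with
  | nil =>
    have : s = 0 := by
      by_contra hs
      simp [Sys.W, hs] at h
    subst this
    decide
  | cons a l ih =>
    rw [Sys.W] at h
    obtain ⟨t, _, ht⟩ := Finset.exists_ne_zero_of_sum_ne_zero h
    split at ht
    · rename_i hp
      have := ih (s := t) (by intro h0; simp [h0] at ht)
      simp [hp, this, add_comm]
    · exact absurd rfl ht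

/-! ### Correctness of the computation -/

theorem mem_ideals {S : Sys} {s : ℕ} : s ∈ S.ideals ↔ s < 512 ∧ S.ideal s = true := by
  simp [Sys.ideals]

theorem tr_eq {S : Sys} {s : ℕ} (hs : s ∈ S.ideals) (t : ℕ) : S.tr S.ideals s t = S.T s t := by
  have key : (S.ideals.filter (fun u => S.step2 s u && S.step1 u t)).length = S.T s t := by
    unfold Sys.T
    have hnd : (S.ideals.filter (fun u => S.step2 s u && S.step1 u t)).Nodup :=
      (List.nodup_range.filter _).filter _
    rw [← List.toFinset_card_of_nodup hnd]
    apply congrArg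
    ext u
    rw [List.mem_toFinset, List.mem_filter, Finset.mem_filter, Finset.mem_range,
      mem_ideals, Bool.and_eq_true]
    constructor
    · rintro ⟨⟨h1, _⟩, h3⟩
      exact ⟨h1, h3⟩
    · rintro ⟨h1, h3⟩
      exact ⟨⟨h1, ideal_of_bstep _ _ _ _ _ (mem_ideals.mp hs).2 h3.1⟩, h3⟩
  unfold Sys.tr
  cases hb : Nat.beq (t &&& s) t
  · by_contra hne
    have hT : S.T s t ≠ 0 := by
      intro h0
      exact hne (by rw [h0]; rfl)
    rw [(land_beq_iff s t).mpr (T_sub hT)] at hb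
    exact absurd hb (by simp)
  · rw [cond_true]
    exact key

def Sys.level (S : Sys) (p : ℕ) : List ℕ := S.ideals.filter (fun s => Nat.beq (pop s) p)

theorem mem_level {S : Sys} {p s : ℕ} :
    s ∈ S.level p ↔ (s < 512 ∧ S.ideal s = true) ∧ pop s = p := by
  simp [Sys.level, mem_ideals]

theorem dot_map (L : List ℕ) (f g : ℕ → ℕ) :
    dot (L.map f) (L.map g) = (L.map (fun t => f t * g t)).sum := by
  induction L with
  | nil => rfl
  | cons x L ih => simp [dot, ih]

theorem W_step (S : Sys) (p a : ℕ) (l : List ℕ) {s : ℕ} (hs : s ∈ S.level (p + a)) :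
    S.W (a :: l) s = dot ((S.level p).map (fun t => S.tr S.ideals s t))
      ((S.level p).map (S.W l)) := by
  have hs' := mem_level.mp hs
  rw [dot_map, Sys.W]
  have hnd : (S.level p).Nodup := (List.nodup_range.filter _).filter _
  rw [← List.sum_toFinset _ hnd, ← Finset.sum_filter]
  symm
  apply Finset.sum_subset_zero_on_sdiff
  · intro t ht
    rw [List.mem_toFinset, mem_level] at ht
    simp only [Finset.mem_filter, Finset.mem_range]
    exact ⟨ht.1.1, by rw [hs'.2, ht.2]⟩
  · intro t ht
    simp only [Finset.mem_sdiff, Finset.mem_filter, Finset.mem_range, List.mem_toFinset,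
      mem_level, not_and] at ht
    by_contra hne
    have hT : S.T s t ≠ 0 := by
      intro h0
      simp [h0] at hne
    exact ht.2 ⟨ht.1.1, T_ideal hs'.1.2 hT⟩ (by have := ht.1.2; omega)
  · intro t _
    rw [tr_eq (mem_ideals.mpr hs'.1)]

/-- The vector of counts on the ideals with `p` cells. -/
def Sys.vec (S : Sys) (p : ℕ) (l : List ℕ) : List ℕ := (S.level p).map (S.W l)

theorem vec_cons (S : Sys) (p a : ℕ) (l : List ℕ) :
    S.vec (p + a) (a :: l) =
      mulVec ((S.level (p + a)).map fun s => (S.level p).map fun t => S.tr S.ideals s t)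
        (S.vec p l) := by
  unfold Sys.vec mulVec
  rw [List.map_map]
  apply List.map_congr_left
  intro s hs
  rw [Function.comp_apply]
  exact W_step S p a l hs

def Sys.tab (S : Sys) : List (List (List (List ℕ))) := S.table S.ideals (Sys.levels S.ideals)

theorem levels_getD (S : Sys) {p : ℕ} (hp : p < 10) :
    (Sys.levels S.ideals).getD p [] = S.level p := by
  simp [Sys.levels, Sys.level, List.getD_eq_getElem?_getD, hp]

theorem tab_getD (S : Sys) {p a : ℕ} (h : p + a < 10) :
    (S.tab.getD p []).getD a [] =
      (S.level (p + a)).map fun s => (S.level p).map fun t => S.tr S.ideals s t := by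
  have hp : p < 10 := by omega
  have ha : a < 10 := by omega
  rw [← levels_getD S h, ← levels_getD S hp]
  unfold Sys.tab Sys.table
  simp [List.getD_eq_getElem?_getD, hp, ha]

theorem withTable_eq {β : Type} (S : Sys) (k : List (List (List (List ℕ))) → β) :
    S.withTable k = k S.tab := by
  unfold Sys.withTable forceTable
  have h1 : ∀ {γ : Type} (x : List ℕ) (k : List ℕ → γ), forceList forceNat x k = k x :=
    fun x k => forceList_eq _ forceNat_eq x k
  have h2 : ∀ {γ : Type} (x : List (List ℕ)) (k : List (List ℕ) → γ),
      forceList (forceList forceNat) x k = k x := fun x k => forceList_eq _ h1 x k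
  have h3 : ∀ {γ : Type} (x : List (List (List ℕ))) (k : List (List (List ℕ)) → γ),
      forceList (forceList (forceList forceNat)) x k = k x := fun x k => forceList_eq _ h2 x k
  rw [h1, h2, forceList_eq _ h3]
  rfl

theorem chk_sound (n p : ℕ) (l : List ℕ) (hn : 10 ≤ n + p)
    (h : chk S0.tab S1.tab S2.tab S3.tab n p (S0.vec p l) (S1.vec p l) (S2.vec p l)
      (S3.vec p l) = true)
    (l' : List ℕ) (hpos : ∀ a ∈ l', a ≠ 0) (hsum : p + l'.sum = 9) :
    (S0.vec 9 (l'.reverse ++ l)).headD 0 = (S1.vec 9 (l'.reverse ++ l)).headD 0 +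
      2 * (S2.vec 9 (l'.reverse ++ l)).headD 0 + (S3.vec 9 (l'.reverse ++ l)).headD 0 := by
  induction l' generalizing n p l with
  | nil =>
    obtain rfl : p = 9 := by simpa using hsum
    obtain ⟨n, rfl⟩ : ∃ k, n = k + 1 := ⟨n - 1, by omega⟩
    rw [chk, if_pos rfl, Nat.beq_eq] at h
    exact h
  | cons a l' ih =>
    have ha : a ≠ 0 := hpos a (by simp)
    rw [List.sum_cons] at hsum
    obtain ⟨n, rfl⟩ : ∃ k, n = k + 1 := ⟨n - 1, by omega⟩
    obtain ⟨b, rfl⟩ : ∃ b, a = b + 1 := ⟨a - 1, by omega⟩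
    rw [chk, if_neg (by omega), List.all_eq_true] at h
    have h := h b (by rw [List.mem_range]; omega)
    have h1 : ∀ (x : List ℕ) (k : List ℕ → Bool), forceList forceNat x k = k x :=
      fun x k => forceList_eq _ forceNat_eq x k
    have hlt : p + (b + 1) < 10 := by omega
    rw [h1, h1, h1, h1, forceNat_eq, tab_getD _ hlt, tab_getD _ hlt, tab_getD _ hlt,
      tab_getD _ hlt, ← vec_cons, ← vec_cons, ← vec_cons, ← vec_cons, Bool.or_eq_true] at h
    have h := h.resolve_left (by
      intro hb
      have := Nat.le_of_ble_eq_true hb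
      omega)
    have := ih n (p + (b + 1)) ((b + 1) :: l) (by omega) h
      (fun x hx => hpos x (by simp [hx])) (by omega)
    simpa using this

theorem vec_zero_nil (S : Sys) (h : S.level 0 = [0]) : S.vec 0 [] = [1] := by
  simp [Sys.vec, h, Sys.W]

theorem vec_nine (S : Sys) (h : S.level 9 = [511]) (l : List ℕ) :
    (S.vec 9 l).headD 0 = S.W l 511 := by
  simp [Sys.vec, h]

theorem level_facts : (S0.level 0 = [0] ∧ S1.level 0 = [0] ∧ S2.level 0 = [0] ∧ S3.level 0 = [0])
    ∧ (S0.level 9 = [511] ∧ S1.level 9 = [511] ∧ S2.level 9 = [511] ∧ S3.level 9 = [511]) := by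
  decide +kernel

theorem W_identity (l : List ℕ) :
    S0.W l 511 = S1.W l 511 + 2 * S2.W l 511 + S3.W l 511 := by
  rw [← W_filter S0 l (by norm_num), ← W_filter S1 l (by norm_num),
    ← W_filter S2 l (by norm_num), ← W_filter S3 l (by norm_num)]
  set l₁ := l.filter (fun a => a ≠ 0) with hl₁
  by_cases hs : l₁.sum = 9
  · have hb := bigCheck_true
    unfold bigCheck at hb
    simp only [withTable_eq] at hb
    obtain ⟨⟨a0, a1, a2, a3⟩, b0, b1, b2, b3⟩ := level_facts
    have := chk_sound 10 0 [] (by norm_num)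
      (by rw [vec_zero_nil _ a0, vec_zero_nil _ a1, vec_zero_nil _ a2, vec_zero_nil _ a3]
          exact hb) l₁.reverse
      (by
        intro a ha
        rw [List.mem_reverse, hl₁, List.mem_filter] at ha
        simpa using ha.2) (by simpa using hs)
    simpa only [vec_nine _ b0, vec_nine _ b1, vec_nine _ b2, vec_nine _ b3, List.reverse_reverse,
      List.append_nil] using this
  · have hz : ∀ S : Sys, S.W l₁ 511 = 0 := by
      intro S
      by_contra hne
      exact hs (by rw [← W_sum hne]; decide)
    simp [hz]

/-! ### Fillings are counted by the recursion -/

/-- `f` is a (partial) filling of the cells in `s` with letters `≤ 2 * k` and content `m`. -/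
structure Sys.Fill (S : Sys) (m : ℕ → ℕ) (k s : ℕ) (f : ℕ → ℕ) : Prop where
  supp : ∀ c, s.testBit c = true ↔ f c ≠ 0
  bd : ∀ c, f c ≤ 2 * k
  rows : ∀ e ∈ S.rows, f e.1 ≠ 0 → f e.2 ≠ 0 →
    f e.1 ≤ f e.2 ∧ (f e.1 = f e.2 → f e.1 % 2 = 0)
  cols : ∀ e ∈ S.cols, f e.1 ≠ 0 → f e.2 ≠ 0 →
    f e.1 ≤ f e.2 ∧ (f e.1 = f e.2 → f e.1 % 2 = 1)
  diag : ∀ c ∈ S.diag, f c % 2 = 0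
  cont : ∀ j, 1 ≤ j → j ≤ k →
    ((Finset.range 9).filter (fun c => (f c + 1) / 2 = j)).card = m j

def glue (k s u t : ℕ) (g : ℕ → ℕ) (c : ℕ) : ℕ :=
  if t.testBit c = true then g c else if u.testBit c = true then 2 * k + 1
  else if s.testBit c = true then 2 * k + 2 else 0

theorem pop_diff {s t : ℕ} (h : ∀ c, t.testBit c = true → s.testBit c = true) :
    pop s = pop t +
      ((Finset.range 9).filter (fun c => s.testBit c = true ∧ ¬ t.testBit c = true)).card := by
  rw [pop_eq, pop_eq, ← Finset.card_union_of_disjoint]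
  · congr 1
    ext c
    simp only [Finset.mem_filter, Finset.mem_union]
    have := h c
    tauto
  · rw [Finset.disjoint_left]
    intro c h1 h2
    simp only [Finset.mem_filter] at h1 h2
    exact h2.2.2 h1.2

theorem edge_aux (k g1 g2 : ℕ) (s1 u1 t1 s2 u2 t2 : Bool)
    (y1 : ¬ (u1 = true ∧ t1 = false ∧ t2 = true)) (y2 : ¬ (s1 = true ∧ u1 = false ∧ u2 = true))
    (w1 : g1 ≤ 2 * k) (w6 : t2 = true → u2 = true)
    (z : t1 = true → t2 = true → g1 ≤ g2)
    (h1 : (if t1 = true then g1 else if u1 = true then 2 * k + 1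
      else if s1 = true then 2 * k + 2 else 0) ≠ 0)
    (h2 : (if t2 = true then g2 else if u2 = true then 2 * k + 1
      else if s2 = true then 2 * k + 2 else 0) ≠ 0) :
    (if t1 = true then g1 else if u1 = true then 2 * k + 1
      else if s1 = true then 2 * k + 2 else 0) ≤
    (if t2 = true then g2 else if u2 = true then 2 * k + 1
      else if s2 = true then 2 * k + 2 else 0) := by
  cases t1 <;> cases t2 <;> cases u1 <;> cases u2 <;> cases s1 <;> cases s2 <;>
    simp at y1 y2 w6 z h1 h2 ⊢ <;> omega

theorem edge_aux2 (k g1 g2 : ℕ) (s1 u1 t1 s2 u2 t2 : Bool) (ε : ℕ)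
    (hb : ¬ (u1 = true ∧ t1 = false ∧ u2 = true ∧ t2 = false) ∧ ε = 0 ∨
      ¬ (s1 = true ∧ u1 = false ∧ s2 = true ∧ u2 = false) ∧ ε = 1)
    (w1 : g1 ≤ 2 * k) (w2 : g2 ≤ 2 * k)
    (z : t1 = true → t2 = true → g1 = g2 → g1 % 2 = ε)
    (h1 : (if t1 = true then g1 else if u1 = true then 2 * k + 1
      else if s1 = true then 2 * k + 2 else 0) ≠ 0)
    (h : (if t1 = true then g1 else if u1 = true then 2 * k + 1
      else if s1 = true then 2 * k + 2 else 0) =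
    (if t2 = true then g2 else if u2 = true then 2 * k + 1
      else if s2 = true then 2 * k + 2 else 0)) :
    (if t1 = true then g1 else if u1 = true then 2 * k + 1
      else if s1 = true then 2 * k + 2 else 0) % 2 = ε := by
  cases t1 <;> cases t2 <;> cases u1 <;> cases u2 <;> cases s1 <;> cases s2 <;>
    simp at hb z h1 h ⊢ <;> omega

theorem glue_fill {S : Sys} {m : ℕ → ℕ} {k s u t : ℕ} {g : ℕ → ℕ}
    (hp : pop s = pop t + m (k + 1))
    (h2 : S.step2 s u = true) (h1 : S.step1 u t = true) (hg : S.Fill m k t g) :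
    S.Fill m (k + 1) s (glue k s u t g) := by
  simp only [Sys.step1, Sys.step2, bstep_iff, Sys.all, List.mem_append] at h1 h2
  obtain ⟨a1, a2, a3, a4⟩ := h1
  obtain ⟨b1, b2, b3, -⟩ := h2
  have hts : ∀ c, t.testBit c = true → s.testBit c = true := fun c h => b1 c (a1 c h)
  refine ⟨?_, ?_, ?_, ?_, ?_, ?_⟩
  · intro c
    have x1 := a1 c
    have x2 := b1 c
    have x3 := hg.supp c
    clear a1 a2 a3 a4 b1 b2 b3 hts hp
    unfold glue
    split_ifs <;> simp_all
  · intro c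
    have x3 := hg.bd c
    unfold glue
    split_ifs <;> omega
  · intro e he n1 n2
    have y3 := a3 e he
    have z := hg.rows e he
    have w1 := hg.supp e.1
    have w2 := hg.supp e.2
    exact ⟨edge_aux _ _ _ _ _ _ _ _ _ (a2 e (Or.inl he)) (b2 e (Or.inl he)) (hg.bd _) (a1 _)
      (fun i1 i2 => (z (w1.mp i1) (w2.mp i2)).1) n1 n2,
      edge_aux2 _ _ _ _ _ _ _ _ _ _ (Or.inl ⟨y3, rfl⟩) (hg.bd _) (hg.bd _)
      (fun i1 i2 => (z (w1.mp i1) (w2.mp i2)).2) n1⟩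
  · intro e he n1 n2
    have y3 := b3 e he
    have z := hg.cols e he
    have w1 := hg.supp e.1
    have w2 := hg.supp e.2
    exact ⟨edge_aux _ _ _ _ _ _ _ _ _ (a2 e (Or.inr he)) (b2 e (Or.inr he)) (hg.bd _) (a1 _)
      (fun i1 i2 => (z (w1.mp i1) (w2.mp i2)).1) n1 n2,
      edge_aux2 _ _ _ _ _ _ _ _ _ _ (Or.inr ⟨y3, rfl⟩) (hg.bd _) (hg.bd _)
      (fun i1 i2 => (z (w1.mp i1) (w2.mp i2)).2) n1⟩
  · intro c hc
    have y := a4 c hc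
    have z := hg.diag c hc
    unfold glue
    split_ifs with i1 i2 i3
    · exact z
    · exact absurd ⟨i2, by simpa using i1⟩ y
    · omega
    · rfl
  · intro j hj1 hj2
    rcases Nat.lt_or_ge j (k + 1) with hj | hj
    · rw [← hg.cont j hj1 (by omega)]
      congr 1
      apply Finset.filter_congr
      intro c _
      have w2 := hg.supp c
      unfold glue
      split_ifs
      · rfl
      all_goals
        have h0 : g c = 0 := by tauto
        rw [h0]
      all_goals omega
    · obtain rfl : j = k + 1 := by omega
      have hd := pop_diff hts
      have : m (k + 1) =
          ((Finset.range 9).filter (fun c => s.testBit c = true ∧ ¬ t.testBit c = true)).card := by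
        omega
      rw [this]
      congr 1
      apply Finset.filter_congr
      intro c _
      have w1 := hg.bd c
      have w5 := b1 c
      unfold glue
      split_ifs with i1 i2 i3
      · simp only [i1, not_true, and_false, iff_false]
        omega
      · simp only [w5 i2, i1]
        simp
        omega
      · simp only [i3, i1]
        simp
        omega
      · simp only [i3]
        simp

theorem fill_split {S : Sys} {m : ℕ → ℕ} {k s : ℕ} (hs : s < 512) {f : ℕ → ℕ}
    (hf : S.Fill m (k + 1) s f) :
    ∃ u t g, u < 512 ∧ t < 512 ∧ pop s = pop t + m (k + 1) ∧ S.step2 s u = true ∧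
      S.step1 u t = true ∧ S.Fill m k t g ∧ glue k s u t g = f := by
  have hlt : ∀ c, f c ≠ 0 → c < 9 := fun c hc => lt9_of_testBit hs ((hf.supp c).mpr hc)
  have hu : ∀ c, (mkMask fun c => decide (f c ≠ 0 ∧ f c ≤ 2 * k + 1)).testBit c = true ↔
      (f c ≠ 0 ∧ f c ≤ 2 * k + 1) := by
    intro c
    rw [testBit_mkMask _ (fun c hc => hlt c (of_decide_eq_true hc).1), decide_eq_true_iff]
  have ht : ∀ c, (mkMask fun c => decide (f c ≠ 0 ∧ f c ≤ 2 * k)).testBit c = true ↔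
      (f c ≠ 0 ∧ f c ≤ 2 * k) := by
    intro c
    rw [testBit_mkMask _ (fun c hc => hlt c (of_decide_eq_true hc).1), decide_eq_true_iff]
  have hu5 := mkMask_lt fun c => decide (f c ≠ 0 ∧ f c ≤ 2 * k + 1)
  have ht5 := mkMask_lt fun c => decide (f c ≠ 0 ∧ f c ≤ 2 * k)
  generalize (mkMask fun c => decide (f c ≠ 0 ∧ f c ≤ 2 * k + 1)) = u at hu hu5
  generalize (mkMask fun c => decide (f c ≠ 0 ∧ f c ≤ 2 * k)) = t at ht ht5
  have hts : ∀ c, t.testBit c = true → s.testBit c = true :=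
    fun c h => (hf.supp c).mpr ((ht c).mp h).1
  refine ⟨u, t, fun c => if f c ≤ 2 * k then f c else 0, hu5, ht5, ?_, ?_, ?_, ?_, ?_⟩
  · rw [pop_diff hts, ← hf.cont (k + 1) (by omega) le_rfl]
    congr 2
    apply Finset.filter_congr
    intro c _
    rw [hf.supp, ht]
    have := hf.bd c
    omega
  · simp only [Sys.step2, bstep_iff, Sys.all, List.mem_append, ← Bool.not_eq_true, hu, hf.supp]
    refine ⟨fun c h => h.1, ?_, ?_, by simp⟩
    · rintro e (he | he)
      · have := hf.rows e he
        omega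
      · have := hf.cols e he
        omega
    · intro e he
      have := hf.cols e he
      have := hf.bd e.1
      have := hf.bd e.2
      omega
  · simp only [Sys.step1, bstep_iff, Sys.all, List.mem_append, ← Bool.not_eq_true, hu, ht]
    refine ⟨fun c h => ⟨h.1, by omega⟩, ?_, ?_, ?_⟩
    · rintro e (he | he)
      · have := hf.rows e he
        omega
      · have := hf.cols e he
        omega
    · intro e he
      have := hf.rows e he
      omega
    · intro c hc
      have := hf.diag c hc
      omega
  · refine ⟨?_, ?_, ?_, ?_, ?_, ?_⟩
    · intro c
      rw [ht]
      split_ifs <;> omega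
    · intro c
      split_ifs <;> omega
    · intro e he
      have := hf.rows e he
      split_ifs <;> omega
    · intro e he
      have := hf.cols e he
      split_ifs <;> omega
    · intro c hc
      have := hf.diag c hc
      split_ifs <;> omega
    · intro j hj1 hj2
      rw [← hf.cont j hj1 (by omega)]
      congr 1
      apply Finset.filter_congr
      intro c _
      split_ifs <;> omega
  · funext c
    have x1 := hf.supp c
    have x2 := hf.bd c
    unfold glue
    simp only [hu, ht, hf.supp]
    split_ifs <;> omega

theorem glue_inj {S : Sys} {m : ℕ → ℕ} {k s u t u' t' : ℕ} {g g' : ℕ → ℕ}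
    (hu : u < 512) (ht : t < 512) (hu' : u' < 512) (ht' : t' < 512)
    (h2 : S.step2 s u = true) (h1 : S.step1 u t = true) (hg : S.Fill m k t g)
    (h2' : S.step2 s u' = true) (h1' : S.step1 u' t' = true) (hg' : S.Fill m k t' g')
    (h : glue k s u t g = glue k s u' t' g') : u = u' ∧ t = t' ∧ g = g' := by
  simp only [Sys.step1, Sys.step2, bstep_iff] at h1 h2 h1' h2'
  have key : ∀ c, (u.testBit c = true ↔ u'.testBit c = true) ∧
      (t.testBit c = true ↔ t'.testBit c = true) ∧ g c = g' c := by
    intro c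
    have e := congrFun h c
    have a1 := h1.1 c
    have a2 := h2.1 c
    have a3 := hg.supp c
    have a4 := hg.bd c
    have b1 := h1'.1 c
    have b2 := h2'.1 c
    have b3 := hg'.supp c
    have b4 := hg'.bd c
    unfold glue at e
    by_cases i1 : t.testBit c = true <;> by_cases i2 : u.testBit c = true <;>
    by_cases i3 : t'.testBit c = true <;> by_cases i4 : u'.testBit c = true <;>
    by_cases i5 : s.testBit c = true <;>
    simp only [i1, i2, i3, i4, i5, if_true, if_false, true_iff, false_iff, iff_true,
      iff_false, not_true, not_false_iff, true_and, false_and, imp_false, ne_eq, not_not,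
      forall_true_left, Bool.false_eq_true] at * <;> omega
  refine ⟨?_, ?_, ?_⟩
  · exact mask_ext hu hu' fun c _ => Bool.eq_iff_iff.mpr (key c).1
  · exact mask_ext ht ht' fun c _ => Bool.eq_iff_iff.mpr (key c).2.1
  · exact funext fun c => (key c).2.2

def contList (m : ℕ → ℕ) : ℕ → List ℕ
  | 0 => []
  | k + 1 => m (k + 1) :: contList m k

theorem card_fill (S : Sys) (m : ℕ → ℕ) (k : ℕ) : ∀ s, s < 512 →
    Finite {f : ℕ → ℕ // S.Fill m k s f} ∧
      Nat.card {f : ℕ → ℕ // S.Fill m k s f} = S.W (contList m k) s := by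
  induction k with
  | zero =>
    intro s hs
    have h0 : ∀ f, S.Fill m 0 s f → f = fun _ => 0 := by
      intro f hf
      funext c
      have := hf.bd c
      omega
    have hsub : Subsingleton {f : ℕ → ℕ // S.Fill m 0 s f} :=
      ⟨fun a b => Subtype.ext ((h0 _ a.2).trans (h0 _ b.2).symm)⟩
    refine ⟨inferInstance, ?_⟩
    by_cases h : s = 0
    · subst h
      have : Nonempty {f : ℕ → ℕ // S.Fill m 0 0 f} :=
        ⟨fun _ => 0, by simp, by simp, by simp, by simp, by simp, by intro j h1 h2; omega⟩
      rw [Nat.card_of_subsingleton this.some]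
      simp [contList, Sys.W]
    · have : IsEmpty {f : ℕ → ℕ // S.Fill m 0 s f} := by
        refine ⟨fun f => h ?_⟩
        apply mask_ext hs (by norm_num)
        intro c _
        have h1 := f.2.supp c
        have h2 := f.2.bd c
        rw [Nat.zero_testBit]
        rw [← Bool.not_eq_true, h1]
        omega
      rw [Nat.card_of_isEmpty]
      simp [contList, Sys.W, h]
  | succ k ih =>
    intro s hs
    obtain ⟨Q, hQ⟩ : ∃ Q : Finset (ℕ × ℕ), Q =
      (Finset.range 512 ×ˢ Finset.range 512).filter (fun q =>
        pop s = pop q.2 + m (k + 1) ∧ S.step2 s q.1 = true ∧ S.step1 q.1 q.2 = true) := ⟨_, rfl⟩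
    have hQm : ∀ q ∈ Q, (q.1 < 512 ∧ q.2 < 512) ∧ pop s = pop q.2 + m (k + 1) ∧
        S.step2 s q.1 = true ∧ S.step1 q.1 q.2 = true := by
      intro q hq
      simpa only [hQ, Finset.mem_filter, Finset.mem_product, Finset.mem_range] using hq
    let F : (Σ q : Q, {f : ℕ → ℕ // S.Fill m k q.1.2 f}) →
        {f : ℕ → ℕ // S.Fill m (k + 1) s f} := fun x =>
      ⟨glue k s x.1.1.1 x.1.1.2 x.2.1, by
        have h := hQm x.1.1 x.1.2
        exact glue_fill h.2.1 h.2.2.1 h.2.2.2 x.2.2⟩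
    have hF : Function.Bijective F := by
      constructor
      · rintro ⟨⟨⟨u, t⟩, hq⟩, ⟨g, hg⟩⟩ ⟨⟨⟨u', t'⟩, hq'⟩, ⟨g', hg'⟩⟩ h
        have h := congrArg Subtype.val h
        have e := hQm _ hq
        have e' := hQm _ hq'
        obtain ⟨rfl, rfl, rfl⟩ := glue_inj e.1.1 e.1.2 e'.1.1 e'.1.2 e.2.2.1 e.2.2.2 hg
          e'.2.2.1 e'.2.2.2 hg' h
        rfl
      · rintro ⟨f, hf⟩
        obtain ⟨u, t, g, h1, h2, h3, h4, h5, h6, h7⟩ := fill_split hs hf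
        have hq : (u, t) ∈ Q := by
          simp only [hQ, Finset.mem_filter, Finset.mem_product, Finset.mem_range]
          exact ⟨⟨h1, h2⟩, h3, h4, h5⟩
        exact ⟨⟨⟨(u, t), hq⟩, ⟨g, h6⟩⟩, Subtype.ext h7⟩
    have hfin : ∀ q : Q, Finite {f : ℕ → ℕ // S.Fill m k q.1.2 f} := fun q =>
      (ih q.1.2 (hQm q.1 q.2).1.2).1
    refine ⟨Finite.of_equiv _ (Equiv.ofBijective F hF), ?_⟩
    rw [← Nat.card_congr (Equiv.ofBijective F hF), Nat.card_sigma]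
    have : ∀ q : Q, Nat.card {f : ℕ → ℕ // S.Fill m k q.1.2 f} =
        S.W (contList m k) q.1.2 := fun q => (ih q.1.2 (hQm q.1 q.2).1.2).2
    rw [Finset.sum_congr rfl (fun q _ => this q),
      Finset.sum_coe_sort Q (fun q => S.W (contList m k) q.2), hQ, Finset.sum_filter,
      Finset.sum_product_right, contList, Sys.W]
    apply Finset.sum_congr rfl
    intro t _
    dsimp only
    split_ifs with hp
    · simp only [hp, true_and]
      rw [← Finset.sum_filter, Finset.sum_const, smul_eq_mul, Sys.T]
    · simp only [hp, false_and, if_false]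
      exact Finset.sum_const_zero

/-! ### From tableaux to fillings -/

/-- A doubled tableau on the set of cells `C` with content `m`; letters at cells satisfying `D`
are even. -/
structure Tab (C : Finset (ℕ × ℕ)) (D : ℕ × ℕ → Prop) (m : ℕ → ℕ) (φ : ℕ × ℕ → ℕ) : Prop where
  outside : ∀ c ∉ C, φ c = 0
  pos : ∀ c ∈ C, 1 ≤ φ c
  rows : ∀ i j, (i, j) ∈ C → (i, j + 1) ∈ C →
    φ (i, j) ≤ φ (i, j + 1) ∧ (φ (i, j) = φ (i, j + 1) → φ (i, j) % 2 = 0)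
  cols : ∀ i j, (i, j) ∈ C → (i + 1, j) ∈ C →
    φ (i, j) ≤ φ (i + 1, j) ∧ (φ (i, j) = φ (i + 1, j) → φ (i, j) % 2 = 1)
  diag : ∀ c ∈ C, D c → φ c % 2 = 0
  cont : ∀ k, (C.filter (fun c => (φ c + 1) / 2 = k)).card = m k

def cellAt (cl : List (ℕ × ℕ)) (c : ℕ) : ℕ × ℕ := cl.getD c (100, 100)

/-- `S` describes the shape `C`, whose cells are enumerated by `cl`. -/
structure Good (C : Finset (ℕ × ℕ)) (D : ℕ × ℕ → Prop) (cl : List (ℕ × ℕ)) (S : Sys) : Prop where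
  cells : C = cl.toFinset
  len : cl.length = 9
  out : (100, 100) ∉ C
  left : ∀ x ∈ C, cellAt cl (cl.idxOf x) = x
  right : ∀ c ∈ List.range 9, cellAt cl c ∈ C ∧ cl.idxOf (cellAt cl c) = c
  rows1 : ∀ e ∈ S.rows, cellAt cl e.1 ∈ C ∧ cellAt cl e.2 ∈ C ∧
    cellAt cl e.2 = ((cellAt cl e.1).1, (cellAt cl e.1).2 + 1)
  rows2 : ∀ x ∈ C, (x.1, x.2 + 1) ∈ C → (cl.idxOf x, cl.idxOf (x.1, x.2 + 1)) ∈ S.rows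
  cols1 : ∀ e ∈ S.cols, cellAt cl e.1 ∈ C ∧ cellAt cl e.2 ∈ C ∧
    cellAt cl e.2 = ((cellAt cl e.1).1 + 1, (cellAt cl e.1).2)
  cols2 : ∀ x ∈ C, (x.1 + 1, x.2) ∈ C → (cl.idxOf x, cl.idxOf (x.1 + 1, x.2)) ∈ S.cols
  diag1 : ∀ c ∈ S.diag, cellAt cl c ∈ C ∧ D (cellAt cl c)
  diag2 : ∀ x ∈ C, D x → cl.idxOf x ∈ S.diag

theorem testBit_511 (c : ℕ) : (511 : ℕ).testBit c = true ↔ c < 9 := by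
  constructor
  · exact lt9_of_testBit (by norm_num)
  · intro h
    interval_cases c <;> rfl

section
variable {C : Finset (ℕ × ℕ)} {D : ℕ × ℕ → Prop} {cl : List (ℕ × ℕ)} {S : Sys}

theorem Good.idx_lt (h : Good C D cl S) {x : ℕ × ℕ} (hx : x ∈ C) : cl.idxOf x < 9 := by
  rw [h.cells, List.mem_toFinset] at hx
  rw [← h.len]
  exact List.idxOf_lt_length_iff.mpr hx

theorem Good.idx_out (h : Good C D cl S) {x : ℕ × ℕ} (hx : x ∉ C) : cl.idxOf x = 9 := by
  rw [h.cells, List.mem_toFinset] at hx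
  rw [← h.len]
  exact List.idxOf_eq_length hx

theorem Good.cellAt_ge (h : Good C D cl S) {c : ℕ} (hc : 9 ≤ c) : cellAt cl c = (100, 100) := by
  unfold cellAt
  exact List.getD_eq_default _ _ (by rw [h.len]; exact hc)

theorem Good.card_filter (h : Good C D cl S) (p : ℕ × ℕ → Prop) [DecidablePred p] :
    (C.filter p).card = ((Finset.range 9).filter (fun c => p (cellAt cl c))).card := by
  symm
  refine Finset.card_bij (fun c _ => cellAt cl c) ?_ ?_ ?_
  · intro c hc
    rw [Finset.mem_filter, Finset.mem_range] at hc
    rw [Finset.mem_filter]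
    exact ⟨(h.right c (List.mem_range.mpr hc.1)).1, hc.2⟩
  · intro c hc d hd e
    rw [Finset.mem_filter, Finset.mem_range] at hc hd
    rw [← (h.right c (List.mem_range.mpr hc.1)).2, e, (h.right d (List.mem_range.mpr hd.1)).2]
  · intro x hx
    rw [Finset.mem_filter] at hx
    refine ⟨cl.idxOf x, ?_, h.left x hx.1⟩
    rw [Finset.mem_filter, Finset.mem_range, h.left x hx.1]
    exact ⟨h.idx_lt hx.1, hx.2⟩

theorem fill_of_tab (h : Good C D cl S) {m : ℕ → ℕ} {N : ℕ} (hN : ∀ k, N < k → m k = 0)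
    {φ : ℕ × ℕ → ℕ} (hφ : Tab C D m φ) : S.Fill m N 511 (fun c => φ (cellAt cl c)) := by
  have mem : ∀ c, c < 9 → cellAt cl c ∈ C := fun c hc => (h.right c (List.mem_range.mpr hc)).1
  refine ⟨?_, ?_, ?_, ?_, ?_, ?_⟩
  · intro c
    rw [testBit_511]
    constructor
    · intro hc
      have := hφ.pos _ (mem c hc)
      omega
    · intro hc
      by_contra hlt
      apply hc
      rw [h.cellAt_ge (by omega)]
      exact hφ.outside _ h.out
  · intro c
    by_cases hc : c < 9
    · by_contra hgt
      have h0 := hφ.cont ((φ (cellAt cl c) + 1) / 2)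
      rw [hN _ (by omega), Finset.card_eq_zero] at h0
      have : cellAt cl c ∈ C.filter (fun x => (φ x + 1) / 2 = (φ (cellAt cl c) + 1) / 2) :=
        Finset.mem_filter.mpr ⟨mem c hc, rfl⟩
      rw [h0] at this
      exact absurd this (Finset.notMem_empty _)
    · rw [h.cellAt_ge (by omega), hφ.outside _ h.out]
      omega
  · intro e he _ _
    obtain ⟨h1, h2, h3⟩ := h.rows1 e he
    rw [h3] at h2 ⊢
    exact hφ.rows _ _ h1 h2
  · intro e he _ _
    obtain ⟨h1, h2, h3⟩ := h.cols1 e he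
    rw [h3] at h2 ⊢
    exact hφ.cols _ _ h1 h2
  · intro c hc
    obtain ⟨h1, h2⟩ := h.diag1 c hc
    exact hφ.diag _ h1 h2
  · intro j _ _
    rw [← hφ.cont j, h.card_filter]

theorem tab_of_fill (h : Good C D cl S) {m : ℕ → ℕ} {N : ℕ} (hN : ∀ k, N < k → m k = 0)
    (h0 : m 0 = 0) {f : ℕ → ℕ} (hf : S.Fill m N 511 f) :
    Tab C D m (fun x => f (cl.idxOf x)) := by
  have pos : ∀ c, c < 9 → f c ≠ 0 := fun c hc => (hf.supp c).mp ((testBit_511 c).mpr hc)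
  refine ⟨?_, ?_, ?_, ?_, ?_, ?_⟩
  · intro x hx
    rw [h.idx_out hx]
    by_contra hne
    have := (testBit_511 9).mp ((hf.supp 9).mpr hne)
    omega
  · intro x hx
    have := pos _ (h.idx_lt hx)
    omega
  · intro i j h1 h2
    exact hf.rows _ (h.rows2 (i, j) h1 h2) (pos _ (h.idx_lt h1)) (pos _ (h.idx_lt h2))
  · intro i j h1 h2
    exact hf.cols _ (h.cols2 (i, j) h1 h2) (pos _ (h.idx_lt h1)) (pos _ (h.idx_lt h2))
  · intro x hx hd
    exact hf.diag _ (h.diag2 x hx hd)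
  · intro k
    rw [h.card_filter]
    have hr : ((Finset.range 9).filter (fun c => (f (cl.idxOf (cellAt cl c)) + 1) / 2 = k)) =
        ((Finset.range 9).filter (fun c => (f c + 1) / 2 = k)) := by
      apply Finset.filter_congr
      intro c hc
      rw [(h.right c (List.mem_range.mpr (Finset.mem_range.mp hc))).2]
    rw [hr]
    by_cases hk : 1 ≤ k ∧ k ≤ N
    · exact hf.cont k hk.1 hk.2
    · have hm : m k = 0 := by
        rcases Nat.eq_zero_or_pos k with rfl | hk0
        · exact h0
        · exact hN k (by omega)
      rw [hm, Finset.card_eq_zero, Finset.filter_eq_empty_iff]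
      intro c hc
      have := pos c (Finset.mem_range.mp hc)
      have := hf.bd c
      omega

theorem card_tab (h : Good C D cl S) {m : ℕ → ℕ} {N : ℕ} (hN : ∀ k, N < k → m k = 0)
    (h0 : m 0 = 0) : Nat.card {φ // Tab C D m φ} = S.W (contList m N) 511 := by
  rw [← (card_fill S m N 511 (by norm_num)).2]
  refine Nat.card_congr
    { toFun := fun φ => ⟨fun c => φ.1 (cellAt cl c), fill_of_tab h hN φ.2⟩
      invFun := fun f => ⟨fun x => f.1 (cl.idxOf x), tab_of_fill h hN h0 f.2⟩
      left_inv := ?_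
      right_inv := ?_ }
  · rintro ⟨φ, hφ⟩
    apply Subtype.ext
    funext x
    show φ (cellAt cl (cl.idxOf x)) = φ x
    by_cases hx : x ∈ C
    · rw [h.left x hx]
    · rw [h.idx_out hx, h.cellAt_ge le_rfl, hφ.outside _ hx, hφ.outside _ h.out]
  · rintro ⟨f, hf⟩
    apply Subtype.ext
    funext c
    show f (cl.idxOf (cellAt cl c)) = f c
    by_cases hc : c < 9
    · rw [(h.right c (List.mem_range.mpr hc)).2]
    · have z : ∀ d, ¬ d < 9 → f d = 0 := by
        intro d hd
        by_contra hne
        exact hd ((testBit_511 d).mp ((hf.supp d).mpr hne))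
      rw [z c hc, h.cellAt_ge (by omega), h.idx_out h.out, z 9 (by omega)]

end

theorem shifted_card (lam : List ℕ) (m : ℕ → ℕ) :
    Nat.card {S : ShiftedSSYT lam //
      ∀ k, ((shiftedCells lam).filter (fun c => (S.entry c + 1) / 2 = k)).card = m k} =
    Nat.card {φ // Tab (shiftedCells lam) (fun c => c.1 = c.2) m φ} := by
  refine Nat.card_congr
    { toFun := fun T => ⟨T.1.entry, ?_⟩
      invFun := fun φ => ⟨⟨φ.1, φ.2.outside, φ.2.pos, fun i j h1 h2 => (φ.2.rows i j h1 h2).1,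
        fun i j h1 h2 e => Nat.even_iff.mpr ((φ.2.rows i j h1 h2).2 e),
        fun i j h1 h2 => (φ.2.cols i j h1 h2).1,
        fun i j h1 h2 e => Nat.odd_iff.mpr ((φ.2.cols i j h1 h2).2 e),
        fun i h => Nat.even_iff.mpr (φ.2.diag (i, i) h rfl)⟩, φ.2.cont⟩
      left_inv := fun T => rfl
      right_inv := fun φ => rfl }
  obtain ⟨T, hT⟩ := T
  refine ⟨T.outside, T.pos, fun i j h1 h2 => ⟨T.rowWeak i j h1 h2, fun e =>
    Nat.even_iff.mp (T.rowPrime i j h1 h2 e)⟩, fun i j h1 h2 => ⟨T.colWeak i j h1 h2, fun e =>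
    Nat.odd_iff.mp (T.colPrime i j h1 h2 e)⟩, ?_, hT⟩
  rintro ⟨i, j⟩ h (rfl : i = j)
  exact Nat.even_iff.mp (T.diag i h)

theorem skew_card (lam mu : List ℕ) (m : ℕ → ℕ) :
    Nat.card {T : SkewSSYT lam mu //
      ∀ k, ((skewCells lam mu).filter (fun c => T.entry c = k)).card = m k} =
    Nat.card {φ // Tab (skewCells lam mu) (fun _ => True) m φ} := by
  refine Nat.card_congr
    { toFun := fun T => ⟨fun c => 2 * T.1.entry c, ?_⟩
      invFun := fun φ => ⟨⟨fun c => φ.1 c / 2, ?_, ?_, ?_, ?_⟩, ?_⟩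
      left_inv := ?_
      right_inv := ?_ }
  · obtain ⟨T, hT⟩ := T
    show Tab _ _ _ (fun c => 2 * T.entry c)
    refine ⟨?_, ?_, ?_, ?_, ?_, ?_⟩
    · intro c hc
      simp [T.outside c hc]
    · intro c hc
      have := T.pos c hc
      omega
    · intro i j h1 h2
      have := T.rowWeak i j h1 h2
      omega
    · intro i j h1 h2
      have := T.colStrict i j h1 h2
      omega
    · intro c _ _
      omega
    · intro k
      rw [← hT k]
      congr 1
      apply Finset.filter_congr
      intro c _
      omega
  · intro c hc
    simp [φ.2.outside c hc]
  · intro c hc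
    have := φ.2.pos c hc
    have := φ.2.diag c hc trivial
    omega
  · intro i j h1 h2
    have := φ.2.rows i j h1 h2
    omega
  · intro i j h1 h2
    have := φ.2.cols i j h1 h2
    have := φ.2.diag _ h1 trivial
    have := φ.2.diag _ h2 trivial
    omega
  · intro k
    rw [← φ.2.cont k]
    congr 1
    apply Finset.filter_congr
    intro c hc
    have := φ.2.diag _ hc trivial
    show φ.1 c / 2 = k ↔ _
    omega
  · rintro ⟨T, hT⟩
    apply Subtype.ext
    cases T with
    | mk entry _ _ _ _ =>
      simp
  · rintro ⟨φ, hφ⟩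
    apply Subtype.ext
    funext c
    show 2 * (φ c / 2) = φ c
    by_cases hc : c ∈ skewCells lam mu
    · have := hφ.diag c hc trivial
      omega
    · rw [hφ.outside c hc]

theorem tab_zero {C : Finset (ℕ × ℕ)} {D : ℕ × ℕ → Prop} {m : ℕ → ℕ} (h0 : m 0 ≠ 0) :
    Nat.card {φ // Tab C D m φ} = 0 := by
  have : IsEmpty {φ // Tab C D m φ} := by
    refine ⟨fun φ => h0 ?_⟩
    rw [← φ.2.cont 0, Finset.card_eq_zero, Finset.filter_eq_empty_iff]
    intro c hc
    have := φ.2.pos c hc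
    omega
  exact Nat.card_of_isEmpty

theorem good0 : Good (skewCells [5, 4, 3, 2, 1] [3, 2, 1]) (fun _ => True)
    [(0, 3), (0, 4), (1, 2), (1, 3), (2, 1), (2, 2), (3, 0), (3, 1), (4, 0)] S0 := by
  constructor <;> decide +kernel

theorem good1 : Good (shiftedCells [5, 4]) (fun c => c.1 = c.2)
    [(0, 0), (0, 1), (0, 2), (0, 3), (0, 4), (1, 1), (1, 2), (1, 3), (1, 4)] S1 := by
  constructor <;> decide +kernel

theorem good2 : Good (shiftedCells [5, 3, 1]) (fun c => c.1 = c.2)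
    [(0, 0), (0, 1), (0, 2), (0, 3), (0, 4), (1, 1), (1, 2), (1, 3), (2, 2)] S2 := by
  constructor <;> decide +kernel

theorem good3 : Good (shiftedCells [4, 3, 2]) (fun c => c.1 = c.2)
    [(0, 0), (0, 1), (0, 2), (0, 3), (1, 1), (1, 2), (1, 3), (2, 2), (2, 3)] S3 := by
  constructor <;> decide +kernel

theorem tab_identity (m : ℕ →₀ ℕ) :
    Nat.card {φ // Tab (skewCells [5, 4, 3, 2, 1] [3, 2, 1]) (fun _ => True) m φ} =
      Nat.card {φ // Tab (shiftedCells [5, 4]) (fun c => c.1 = c.2) m φ} +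
      2 * Nat.card {φ // Tab (shiftedCells [5, 3, 1]) (fun c => c.1 = c.2) m φ} +
      Nat.card {φ // Tab (shiftedCells [4, 3, 2]) (fun c => c.1 = c.2) m φ} := by
  by_cases h0 : m 0 = 0
  · have hN : ∀ k, m.support.sup id < k → m k = 0 := by
      intro k hk
      by_contra hne
      have := Finset.le_sup (f := id) (Finsupp.mem_support_iff.mpr hne)
      simp only [id] at this hk
      omega
    rw [card_tab good0 hN h0, card_tab good1 hN h0, card_tab good2 hN h0, card_tab good3 hN h0]
    exact W_identity _
  · rw [tab_zero h0, tab_zero h0, tab_zero h0, tab_zero h0]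

theorem skewSchur_staircase_54321_321 :
    skewSchur [5, 4, 3, 2, 1] [3, 2, 1] =
      schurP [5, 4] + 2 * schurP [5, 3, 1] + schurP [4, 3, 2] := by
  have h2 : (2 : MvPowerSeries ℕ ℚ) * schurP [5, 3, 1] = schurP [5, 3, 1] + schurP [5, 3, 1] :=
    two_mul _
  rw [h2]
  funext m
  show (Nat.card _ : ℚ) = ((Nat.card _ : ℚ) + ((Nat.card _ : ℚ) + (Nat.card _ : ℚ))) +
    (Nat.card _ : ℚ)
  rw [skew_card, shifted_card, shifted_card, shifted_card, tab_identity]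
  push_cast
  ring

end
end
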